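/- arXiv:2208.05014 — 6 statements merged into one kernel-verified Lean document; each statement's English description precedes it below -/
import Mathlib

section
/- Let G be a finite group, H a subgroup, and ρ : H → GL(V) a finite-dimensional complex representation with induced representation Ind_H^G ρ of G. Fix σ ∈ G, let τ_1, …, τ_r be a complete set of representatives for the double cosets H\G/⟨σ⟩, and for each ν let l_ν be the least positive integer a with τ_ν σ^a τ_ν^{-1} ∈ H. Then for every t ∈ ℂ, det(1 − t·(Ind_H^G ρ)(σ)) = ∏_{ν=1}^r det(1 − t^{l_ν}·ρ(τ_ν σ^{l_ν} τ_ν^{-1})), where 1 denotes the identity operator on the respective spaces. -/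
/-!
Choose as right coset representatives of `H` the elements `τ ν * σ ^ i` with `i < l ν`
(`existsUnique_rep`). Evaluating at them identifies the induced space with the functions
`(Σ ν, Fin (l ν)) → V` (`indEquiv`), and turns `σ` into a sum of twisted cyclic shifts: inside
the block `ν` the coordinate `i` of the image is the coordinate `i + 1`, except that the last one
is the coordinate `0` hit by `A ν = ρ (τ ν * σ ^ l ν * (τ ν)⁻¹)` (`twistedShift`).

Let `S` be the truncated (nilpotent) shift. Then
`1 - t T = (1 - t S) (1 - E R)`, where `R x ν = t A ν (x (ν, 0))` and
`(E v) (ν, i) = t ^ (l ν - 1 - i) v ν`. The first factor has determinant `1`, and by Sylvester's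
identity `det (1 - E R) = det (1 - R E)`, where `1 - R E` acts on `Fin r → V` diagonally by
`1 - t ^ l ν A ν`.
-/

/-- The space of the representation of `G` induced by the representation `ρ` of the subgroup
`H ≤ G`: functions `f : G → V` with `f (h * g) = ρ h (f g)` for `h ∈ H`. -/
def indCarrier {G : Type*} [Group G] (H : Subgroup G) {V : Type*} [AddCommGroup V]
    [Module ℂ V] (ρ : Representation ℂ H V) : Submodule ℂ (G → V) where
  carrier := {f | ∀ (h : H) (g : G), f ((h : G) * g) = ρ h (f g)}
  add_mem' := fun {a b} ha hb h g => by
    simp only [Pi.add_apply, ha h g, hb h g, map_add]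
  zero_mem' := fun h g => by simp
  smul_mem' := fun c f hf h g => by
    simp only [Pi.smul_apply, hf h g, map_smul]

/-- The representation of `G` induced by the representation `ρ` of the subgroup `H ≤ G`,
acting by right translation on `indCarrier H ρ`. -/
noncomputable def indRep {G : Type*} [Group G] (H : Subgroup G) {V : Type*} [AddCommGroup V]
    [Module ℂ V] (ρ : Representation ℂ H V) : Representation ℂ G (indCarrier H ρ) where
  toFun σ :=
    { toFun := fun f => ⟨fun g => f.1 (g * σ), fun h g => by
        simpa [mul_assoc] using f.2 h (g * σ)⟩
      map_add' := fun f f' => rfl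
      map_smul' := fun c f => rfl }
  map_one' := LinearMap.ext fun f => Subtype.ext (funext fun g => by simp)
  map_mul' := fun σ₁ σ₂ => LinearMap.ext fun f => Subtype.ext (funext fun g => by
    simp [mul_assoc])

/-- Sylvester's identity `det (1 - AB) = det (1 - BA)` for linear maps between two spaces. -/
lemma det_one_sub_comp_comm {K M N : Type*} [Field K] [AddCommGroup M] [Module K M]
    [AddCommGroup N] [Module K N] [FiniteDimensional K M] [FiniteDimensional K N]
    (f : M →ₗ[K] N) (g : N →ₗ[K] M) :
    LinearMap.det (1 - f ∘ₗ g) = LinearMap.det (1 - g ∘ₗ f) := by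
  classical
  let b := Module.finBasis K M
  let c := Module.finBasis K N
  rw [← LinearMap.det_toMatrix c, ← LinearMap.det_toMatrix b, map_sub, map_sub,
    LinearMap.toMatrix_comp c b c, LinearMap.toMatrix_comp b c b, LinearMap.toMatrix_one,
    LinearMap.toMatrix_one, Matrix.det_one_sub_mul_comm]

lemma det_one_sub_of_isNilpotent {K M : Type*} [Field K] [AddCommGroup M] [Module K M]
    [FiniteDimensional K M] {f : Module.End K M} (hf : IsNilpotent f) :
    LinearMap.det (1 - f) = 1 := by
  have h := LinearMap.eval_charpoly f 1
  rw [IsNilpotent.charpoly_eq_X_pow_finrank hf] at h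
  simpa using h.symm

section Shift

variable {κ V : Type*} [AddCommGroup V] [Module ℂ V]

/-- The truncated shift on `⨁ ν, V ^ (l ν)`: the coordinate `i` of the image in the block `ν` is
the coordinate `i + 1`, and `0` when `i` is the last index of the block. -/
def truncShift (V : Type*) [AddCommGroup V] [Module ℂ V] (l : κ → ℕ) :
    Module.End ℂ ((Σ ν, Fin (l ν)) → V) where
  toFun x p := if h : (p.2 : ℕ) + 1 < l p.1 then x ⟨p.1, ⟨p.2 + 1, h⟩⟩ else 0
  map_add' x y := by ext p; dsimp only [Pi.add_apply]; split_ifs <;> simp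
  map_smul' c x := by
    ext p; dsimp only [Pi.smul_apply, RingHom.id_apply]; split_ifs <;> simp

/-- The twisted cyclic shift on `⨁ ν, V ^ (l ν)`: the coordinate `i` of the image in the block `ν`
is the coordinate `i + 1`, and `A ν` applied to the coordinate `0` when `i` is the last index. -/
def twistedShift (l : κ → ℕ) (hl : ∀ ν, 0 < l ν) (A : κ → V →ₗ[ℂ] V) :
    Module.End ℂ ((Σ ν, Fin (l ν)) → V) where
  toFun x p := if h : (p.2 : ℕ) + 1 < l p.1 then x ⟨p.1, ⟨p.2 + 1, h⟩⟩
    else A p.1 (x ⟨p.1, ⟨0, hl p.1⟩⟩)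
  map_add' x y := by ext p; dsimp only [Pi.add_apply]; split_ifs <;> simp
  map_smul' c x := by
    ext p; dsimp only [Pi.smul_apply, RingHom.id_apply]; split_ifs <;> simp

lemma truncShift_pow_apply_eq_zero (l : κ → ℕ) (n : ℕ) (x : (Σ ν, Fin (l ν)) → V)
    (p : Σ ν, Fin (l ν)) (hp : l p.1 ≤ p.2 + n) : (truncShift V l ^ n) x p = 0 := by
  induction n generalizing p with
  | zero => exact absurd p.2.2 (by omega)
  | succ n ih =>
    rw [pow_succ']
    change (if h : (p.2 : ℕ) + 1 < l p.1 then (truncShift V l ^ n) x ⟨p.1, ⟨p.2 + 1, h⟩⟩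
      else 0) = 0
    split_ifs with h
    · exact ih _ (by dsimp only; omega)
    · rfl

lemma isNilpotent_truncShift [Fintype κ] (l : κ → ℕ) : IsNilpotent (truncShift V l) := by
  refine ⟨∑ ν, l ν, LinearMap.ext fun x => funext fun p => ?_⟩
  refine truncShift_pow_apply_eq_zero l _ x p ?_
  have := Finset.single_le_sum (f := l) (fun _ _ => Nat.zero_le _) (Finset.mem_univ p.1)
  omega

lemma det_one_sub_smul_twistedShift [Fintype κ] [FiniteDimensional ℂ V] (l : κ → ℕ)
    (hl : ∀ ν, 0 < l ν) (A : κ → V →ₗ[ℂ] V) (t : ℂ) :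
    LinearMap.det (1 - t • twistedShift l hl A)
      = ∏ ν, LinearMap.det ((1 : V →ₗ[ℂ] V) - t ^ l ν • A ν) := by
  let R : ((Σ ν, Fin (l ν)) → V) →ₗ[ℂ] (κ → V) :=
    LinearMap.pi fun ν => t • A ν ∘ₗ LinearMap.proj ⟨ν, ⟨0, hl ν⟩⟩
  let E : (κ → V) →ₗ[ℂ] ((Σ ν, Fin (l ν)) → V) :=
    LinearMap.pi fun p => t ^ (l p.1 - 1 - p.2) • LinearMap.proj p.1
  have hfac : 1 - t • twistedShift l hl A = (1 - t • truncShift V l) * (1 - E ∘ₗ R) := by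
    refine LinearMap.ext fun x => funext fun p => ?_
    obtain ⟨ν, i, hi⟩ := p
    by_cases h : i + 1 < l ν
    · have e : l ν - 1 - i = (l ν - 1 - (i + 1)) + 1 := by omega
      simp only [twistedShift, truncShift, E, R, LinearMap.sub_apply, Module.End.mul_apply,
        Module.End.one_apply, LinearMap.smul_apply, Pi.sub_apply, Pi.smul_apply,
        LinearMap.coe_mk, AddHom.coe_mk, LinearMap.comp_apply, LinearMap.pi_apply,
        LinearMap.proj_apply, h, dite_true]
      rw [e, pow_succ]
      module
    · have e : l ν - 1 - i = 0 := by omega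
      simp [twistedShift, truncShift, E, R, h, e]
  have hdiag : 1 - R ∘ₗ E
      = LinearMap.pi fun ν => ((1 : V →ₗ[ℂ] V) - t ^ l ν • A ν) ∘ₗ LinearMap.proj ν := by
    refine LinearMap.ext fun v => funext fun ν => ?_
    have e : t ^ l ν = t * t ^ (l ν - 1) := by
      rw [← pow_succ', Nat.sub_add_cancel (hl ν)]
    simp [E, R, e, smul_smul]
  rw [hfac, map_mul, det_one_sub_of_isNilpotent ((isNilpotent_truncShift l).smul t), one_mul,
    det_one_sub_comp_comm, hdiag, LinearMap.det_pi]

end Shift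

section Induced

variable {G : Type*} [Group G] {H : Subgroup G} {V : Type*} [AddCommGroup V] [Module ℂ V]

/-- Evaluation at a complete system `c` of representatives of the right cosets `H \ G` identifies
the induced space with `ι → V`. -/
noncomputable def indEquiv {ι : Type*} (ρ : Representation ℂ H V) (c : ι → G)
    (hc : ∀ g : G, ∃! p : ι, ∃ h : H, g = h * c p) : indCarrier H ρ ≃ₗ[ℂ] (ι → V) :=
  LinearEquiv.ofBijective
    ((LinearMap.pi fun p => LinearMap.proj (c p)) ∘ₗ (indCarrier H ρ).subtype) <| by
    constructor
    · rw [← LinearMap.ker_eq_bot, LinearMap.ker_eq_bot']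
      intro f hf
      refine Subtype.ext (funext fun g => ?_)
      obtain ⟨p, ⟨h, rfl⟩, -⟩ := hc g
      have : f.1 (c p) = 0 := congrFun hf p
      rw [f.2 h, this, map_zero]
      rfl
    · intro x
      choose p hp using hc
      have hu (g : G) := (hp g).2
      replace hp (g : G) := (hp g).1
      choose h hh using hp
      have hpk (k : H) (g : G) : p (k * g) = p g :=
        (hu (k * g) (p g) ⟨k * h g, by
          rw [Subgroup.coe_mul, mul_assoc, ← hh g]⟩).symm
      have hhk (k : H) (g : G) : h (k * g) = k * h g := by
        have h1 := hh (k * g)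
        rw [hpk, eq_comm] at h1
        refine Subtype.ext (mul_right_cancel (b := c (p g)) (h1.trans ?_))
        rw [Subgroup.coe_mul, mul_assoc, ← hh g]
      refine ⟨⟨fun g => ρ (h g) (x (p g)), fun k g => ?_⟩, funext fun q => ?_⟩
      · dsimp only
        rw [hpk, hhk, map_mul, Module.End.mul_apply]
      · change ρ (h (c q)) (x (p (c q))) = x q
        have h1 : p (c q) = q := (hu (c q) q ⟨1, by simp⟩).symm
        have h2 := hh (c q)
        rw [h1] at h2
        have h3 : h (c q) = 1 := Subtype.ext (by simpa using h2)
        rw [h1, h3, map_one, Module.End.one_apply]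

lemma indEquiv_apply {ι : Type*} (ρ : Representation ℂ H V) (c : ι → G)
    (hc : ∀ g : G, ∃! p : ι, ∃ h : H, g = h * c p) (f : indCarrier H ρ) (p : ι) :
    indEquiv ρ c hc f p = f.1 (c p) := rfl

/-- The elements `τ ν * σ ^ i`, `i < l ν`, represent every right coset of `H` exactly once. -/
lemma existsUnique_rep (σ : G) {r : ℕ} (τ : Fin r → G)
    (hτ : ∀ g : G, ∃! ν : Fin r, ∃ h ∈ H, ∃ n : ℤ, g = h * τ ν * σ ^ n)
    (l : Fin r → ℕ)
    (hl : ∀ ν, IsLeast {a : ℕ | 0 < a ∧ τ ν * σ ^ a * (τ ν)⁻¹ ∈ H} (l ν)) (g : G) :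
    ∃! p : (Σ ν, Fin (l ν)), ∃ h : H, g = h * (τ p.1 * σ ^ (p.2 : ℕ)) := by
  obtain ⟨ν, ⟨h, hh, n, hg⟩, hu⟩ := hτ g
  have hlpos : (0 : ℤ) < l ν := by exact_mod_cast (hl ν).1.1
  refine existsUnique_of_exists_of_unique ?_ ?_
  · have hi0 := Int.emod_nonneg n hlpos.ne'
    have hi1 := Int.emod_lt_of_pos n hlpos
    refine ⟨⟨ν, ⟨(n % l ν).toNat, by omega⟩⟩,
      ⟨h * (τ ν * σ ^ l ν * (τ ν)⁻¹) ^ (n / l ν),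
        H.mul_mem hh (H.zpow_mem (hl ν).1.2 _)⟩, ?_⟩
    have e : σ ^ n = (σ ^ l ν) ^ (n / l ν) * σ ^ (n % l ν).toNat := by
      rw [← zpow_natCast, ← zpow_natCast, Int.toNat_of_nonneg hi0, ← zpow_mul, ← zpow_add,
        Int.mul_ediv_add_emod]
    dsimp only
    rw [conj_zpow, hg, e]
    group
  · -- If `i < j < l ν` gave the same coset, `j - i` would contradict the minimality of `l ν`.
    have key (ν : Fin r) (i j : ℕ) (hj : j < l ν) (a b : H)
        (hab : (a : G) * (τ ν * σ ^ i) = b * (τ ν * σ ^ j)) : j ≤ i := by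
      by_contra! hij
      have hm : τ ν * σ ^ (j - i) * (τ ν)⁻¹ ∈ H := by
        have : τ ν * σ ^ (j - i) * (τ ν)⁻¹ = (b⁻¹ * a : H) := by
          rw [pow_sub σ hij.le, Subgroup.coe_mul, Subgroup.coe_inv, eq_inv_mul_iff_mul_eq]
          calc (b : G) * (τ ν * (σ ^ j * (σ ^ i)⁻¹) * (τ ν)⁻¹)
              = b * (τ ν * σ ^ j) * (σ ^ i)⁻¹ * (τ ν)⁻¹ := by group
            _ = a := by rw [← hab]; group
        rw [this]
        exact SetLike.coe_mem _
      have := (hl ν).2 ⟨by omega, hm⟩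
      omega
    rintro ⟨μ, i, hi⟩ ⟨μ', j, hj⟩ ⟨a, ha⟩ ⟨b, hb⟩
    dsimp only at ha hb
    obtain rfl : μ = ν := hu μ ⟨a, a.2, i, by rw [ha, zpow_natCast, mul_assoc]⟩
    obtain rfl : μ' = μ := hu μ' ⟨b, b.2, j, by rw [hb, zpow_natCast, mul_assoc]⟩
    obtain rfl : i = j := le_antisymm (key _ j i hi b a (hb.symm.trans ha))
      (key _ i j hj a b (ha.symm.trans hb))
    rfl

end Induced

/-- **The characteristic polynomial of an induced representation factors** along the double
cosets `H\G/⟨σ⟩` (the key computation in the proof of Satz 1):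
`det(1 - t·Ind ρ (σ)) = ∏ ν, det(1 - t^{l ν} · ρ (τ ν σ^{l ν} τ ν⁻¹))`. -/
theorem stmt_5 {G : Type*} [Group G] [Fintype G] (H : Subgroup G)
    {V : Type*} [AddCommGroup V] [Module ℂ V] [FiniteDimensional ℂ V]
    (ρ : Representation ℂ H V) (σ : G) (r : ℕ) (τ : Fin r → G)
    (hτ : ∀ g : G, ∃! ν : Fin r, ∃ h ∈ H, ∃ n : ℤ, g = h * τ ν * σ ^ n)
    (l : Fin r → ℕ)
    (hl : ∀ ν, IsLeast {a : ℕ | 0 < a ∧ τ ν * σ ^ a * (τ ν)⁻¹ ∈ H} (l ν))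
    (hmem : ∀ ν, τ ν * σ ^ (l ν) * (τ ν)⁻¹ ∈ H) (t : ℂ) :
    LinearMap.det ((1 : indCarrier H ρ →ₗ[ℂ] indCarrier H ρ) - t • (indRep H ρ σ))
      = ∏ ν, LinearMap.det ((1 : V →ₗ[ℂ] V) - t ^ (l ν) • ρ ⟨τ ν * σ ^ (l ν) * (τ ν)⁻¹, hmem ν⟩) := by
  have hlpos ν : 0 < l ν := (hl ν).1.1
  let e := indEquiv ρ (fun p : (Σ ν, Fin (l ν)) => τ p.1 * σ ^ (p.2 : ℕ))
    (existsUnique_rep σ τ hτ l hl)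
  rw [← det_one_sub_smul_twistedShift l hlpos, ← LinearMap.det_conj _ e]
  congr 1
  refine LinearMap.ext fun x => ?_
  obtain ⟨f, rfl⟩ := e.surjective x
  -- The intertwining relation: evaluation turns translation by `σ` into the twisted shift.
  have hT : e (indRep H ρ σ f) = twistedShift l hlpos
      (fun ν => ρ ⟨τ ν * σ ^ l ν * (τ ν)⁻¹, hmem ν⟩) (e f) := by
    refine funext fun p => ?_
    obtain ⟨ν, i, hi⟩ := p
    change f.1 (τ ν * σ ^ i * σ) = if h : i + 1 < l ν then f.1 (τ ν * σ ^ (i + 1))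
      else ρ ⟨τ ν * σ ^ l ν * (τ ν)⁻¹, hmem ν⟩ (f.1 (τ ν * σ ^ 0))
    rw [mul_assoc, ← pow_succ]
    split_ifs with h
    · rfl
    · have hil : i + 1 = l ν := by omega
      rw [← f.2, hil]
      simp
  simp [hT]
end

section
/- (Artin induction, solvability of system (24)) Let G be a finite group with irreducible complex characters χ^1, χ^2, …, χ^x, where χ^1 is the trivial character. Then for every j with 2 ≤ j ≤ x there exist rational numbers x_{σ,ψ}, indexed by pairs (σ, ψ) where σ ranges over the nonidentity elements of G and ψ ranges over the nontrivial irreducible (degree-one) characters of the cyclic subgroup ⟨σ⟩, such that χ^j = ∑_{σ ≠ 1} ∑_{ψ ≠ 1} x_{σ,ψ} · Ind_{⟨σ⟩}^G ψ as class functions on G. -/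
/-!
Let `χ` be a nontrivial irreducible character. Write `U` for the rational span of the functions
`Ind_{⟨σ⟩}^G ψ` with `σ ≠ 1`, `ψ ≠ 1`, and `r` for the regular character of `G`.

*Artin's theorem.* For a cyclic subgroup `C`, `χ · Ind_C^G 1 = Ind_C^G (χ|_C)`, and `χ|_C` is an
integral combination of linear characters of `C` (`exists_rat_character_eq`). Up to a scalar,
`Ind_C^G 1` is `g ↦ #{x | x g x⁻¹ ∈ C}`, which is the sum over the subgroups `D` of `C` of
`g ↦ #{x | ⟨x g x⁻¹⟩ = D}`. Induction on `C` inverts this relation (`genPart_mem`), and summing the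
latter functions over all cyclic subgroups of `G` gives the constant `|G|`. Hence `χ` is a rational
combination of the functions `Ind_C^G ψ`, with all `ψ` allowed (`character_mem_fullSpan`).

*Removing the trivial `ψ`.* Since the linear characters of `C` add up to its regular character,
`∑_ψ Ind_C^G ψ = r`, so `Ind_C^G 1 ≡ r` modulo `U` for every `C` (`ind_mem_fullSpan`). Thus
`χ = u + c r` with `u ∈ U` and `c` rational. Both `χ` and `u` are orthogonal to the trivial
character while `r` is not, so `c = 0`.
-/

open CategoryTheory
open scoped Classical

/-- The class function on `G` induced by a class function `ψ` on the subgroup `H ≤ G`,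
given by the Frobenius formula
`(Ind_H^G ψ)(g) = (1/|H|) ∑_{x ∈ G, x g x⁻¹ ∈ H} ψ (x g x⁻¹)`. -/
noncomputable def indClassFun {G : Type*} [Group G] [Fintype G] (H : Subgroup G)
    (ψ : H → ℂ) (g : G) : ℂ :=
  (Nat.card H : ℂ)⁻¹ * ∑ x : G, if h : x * g * x⁻¹ ∈ H then ψ ⟨x * g * x⁻¹, h⟩ else 0

/-! ### Induced class functions -/

lemma indClassFun_sum {G ι : Type*} [Group G] [Fintype G] [Fintype ι] (H : Subgroup G)
    (c : ι → ℂ) (f : ι → H → ℂ) (g : G) :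
    indClassFun H (fun h => ∑ i, c i * f i h) g = ∑ i, c i * indClassFun H (f i) g := by
  simp only [indClassFun, Finset.mul_sum]
  rw [Finset.sum_comm]
  refine Finset.sum_congr rfl fun x _ => ?_
  split_ifs with h
  · rw [Finset.mul_sum]
    exact Finset.sum_congr rfl fun i _ => by ring
  · simp

/-- The class function `|H|·δ₁` on `H`, i.e. the regular character of `H`, induces to the regular
character of `G`. -/
lemma indClassFun_regular {G : Type*} [Group G] [Fintype G] (H : Subgroup G) (g : G) :
    indClassFun H (fun h => if h = 1 then (Nat.card H : ℂ) else 0) g =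
      if g = 1 then (Nat.card G : ℂ) else 0 := by
  have hH : (Nat.card H : ℂ) ≠ 0 := by exact_mod_cast Nat.card_pos.ne'
  have key : ∀ x : G, (if h : x * g * x⁻¹ ∈ H then
      (if (⟨x * g * x⁻¹, h⟩ : H) = 1 then (Nat.card H : ℂ) else 0) else 0) =
      if g = 1 then (Nat.card H : ℂ) else 0 := by
    intro x
    by_cases hg : g = 1
    · subst hg
      simp
    · simp [hg, Subtype.ext_iff]
  rw [indClassFun, Finset.sum_congr rfl fun x _ => key x]
  by_cases hg : g = 1
  · simp [hg]
    field_simp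
  · simp [hg]

/-- Induction preserves the inner product with the trivial character up to normalisation; here
only for a nontrivial linear character, where that product vanishes. -/
lemma sum_indClassFun_eq_zero {G : Type*} [Group G] [Fintype G] (H : Subgroup G)
    (ψ : H →* ℂˣ) (hψ : ψ ≠ 1) :
    ∑ g, indClassFun H (fun h => (ψ h : ℂ)) g = 0 := by
  simp only [indClassFun]
  rw [← Finset.mul_sum, Finset.sum_comm]
  have hcomp : (Units.coeHom ℂ).comp ψ ≠ 1 := by
    intro h
    apply hψ
    ext a
    exact DFunLike.congr_fun h a
  have h0 : ∑ h : H, ((ψ h : ℂˣ) : ℂ) = 0 := sum_hom_units_eq_zero _ hcomp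
  have key : ∀ x : G, ∑ g : G, (if h : x * g * x⁻¹ ∈ H then
      ((ψ ⟨x * g * x⁻¹, h⟩ : ℂˣ) : ℂ) else 0) = 0 := by
    intro x
    rw [Fintype.sum_equiv (MulAut.conj x).toEquiv _
      (fun y => if h : y ∈ H then ((ψ ⟨y, h⟩ : ℂˣ) : ℂ) else 0) (fun g => by rfl)]
    rw [Finset.sum_dite, Finset.sum_const_zero, add_zero, ← h0]
    exact Fintype.sum_equiv (Equiv.subtypeEquivRight (by simp)) _ _ (fun _ => rfl)
  simp [key]

/-! ### Linear characters of a finite abelian group -/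

section Abelian

variable {A : Type*} [Group A] [IsMulCommutative A] [Fintype A]

noncomputable instance : Fintype (A →* ℂˣ) :=
  letI : CommGroup A := { mul_comm := mul_comm' }
  Fintype.ofFinite _

/-- Column orthogonality for the linear characters of a finite abelian group. -/
lemma sum_linearChar_apply (a : A) :
    ∑ ψ : A →* ℂˣ, ((ψ a : ℂˣ) : ℂ) = if a = 1 then (Nat.card A : ℂ) else 0 := by
  let _ : CommGroup A := { mul_comm := mul_comm' }
  split_ifs with h
  · subst h
    simp [← Nat.card_eq_fintype_card,
      CommGroup.card_monoidHom_of_hasEnoughRootsOfUnity A ℂ]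
  · obtain ⟨φ, hφ⟩ := CommGroup.exists_apply_ne_one_of_hasEnoughRootsOfUnity A ℂ h
    have h1 : ∑ ψ : A →* ℂˣ, ((ψ a : ℂˣ) : ℂ) = (φ a : ℂ) * ∑ ψ : A →* ℂˣ, ((ψ a : ℂˣ) : ℂ) := by
      rw [Finset.mul_sum]
      exact Fintype.sum_equiv (Equiv.mulLeft φ⁻¹) _ _ (fun ψ => by simp)
    have h2 : ((φ a : ℂ) - 1) * ∑ ψ : A →* ℂˣ, ((ψ a : ℂˣ) : ℂ) = 0 := by
      rw [sub_mul, ← h1]; ring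
    rcases mul_eq_zero.1 h2 with h3 | h3
    · exact absurd (Units.ext (by simpa using sub_eq_zero.1 h3)) hφ
    · exact h3

/-- The twist `a ↦ ψ(a)⁻¹ ρ(a)` of a representation by the inverse of a linear character; its
invariants are the `ψ`-isotypic part of `ρ`. -/
noncomputable def twistRep {V : Type*} [AddCommGroup V] [Module ℂ V]
    (ρ : Representation ℂ A V) (ψ : A →* ℂˣ) : Representation ℂ A V where
  toFun a := ((ψ a⁻¹ : ℂˣ) : ℂ) • ρ a
  map_one' := by simp
  map_mul' a b := by
    simp [smul_smul, mul_comm]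

/-- The restriction of a character to an abelian group is a rational (indeed nonnegative integral)
combination of linear characters: the coefficient of `ψ` is the dimension of the invariants
of the twisted representation. -/
lemma exists_rat_character_eq {V : Type*} [AddCommGroup V] [Module ℂ V] [FiniteDimensional ℂ V]
    (ρ : Representation ℂ A V) :
    ∃ q : (A →* ℂˣ) → ℚ, ∀ a, ρ.character a = ∑ ψ, (q ψ : ℂ) * ((ψ a : ℂˣ) : ℂ) := by
  have hA : (Nat.card A : ℂ) ≠ 0 := by exact_mod_cast Nat.card_pos.ne'
  let _ : Invertible (Nat.card A : ℂ) := invertibleOfNonzero hA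
  refine ⟨fun ψ => (Module.finrank ℂ (twistRep ρ ψ).invariants : ℚ), fun a => ?_⟩
  have h1 : ∀ ψ : A →* ℂˣ, ((Module.finrank ℂ (twistRep ρ ψ).invariants : ℚ) : ℂ) =
      (Nat.card A : ℂ)⁻¹ * ∑ b : A, ((ψ b⁻¹ : ℂˣ) : ℂ) * ρ.character b := by
    intro ψ
    have := Representation.card_inv_mul_sum_char_eq_finrank (twistRep ρ ψ)
    push_cast
    rw [← this]
    simp [Representation.character, twistRep]
  have h2 : ∀ b : A, ∑ ψ : A →* ℂˣ, ((ψ b⁻¹ : ℂˣ) : ℂ) * ((ψ a : ℂˣ) : ℂ) =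
      if b = a then (Nat.card A : ℂ) else 0 := by
    intro b
    have := sum_linearChar_apply (b⁻¹ * a)
    simp only [map_mul, Units.val_mul, inv_mul_eq_one] at this
    exact this
  calc ρ.character a
      = (Nat.card A : ℂ)⁻¹ * ∑ b : A, ρ.character b * (if b = a then (Nat.card A : ℂ) else 0) := by
        simp
        field_simp
    _ = _ := by
        simp_rw [h1, ← h2, Finset.mul_sum, Finset.sum_mul]
        rw [Finset.sum_comm]
        refine Finset.sum_congr rfl fun ψ _ => Finset.sum_congr rfl fun b _ => by ring

end Abelian

/-! ### Artin induction -/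

section Artin

variable (G : Type) [Group G] [Fintype G]

/-- The rational span of the functions `Ind_{⟨σ⟩}^G ψ` with `σ ≠ 1` and `ψ ≠ 1`. -/
noncomputable def nontrivSpan : Submodule ℚ (G → ℂ) :=
  Submodule.span ℚ {f | ∃ (σ : G) (ψ : Subgroup.zpowers σ →* ℂˣ), σ ≠ 1 ∧ ψ ≠ 1 ∧
    f = indClassFun (Subgroup.zpowers σ) (fun h => ((ψ h : ℂˣ) : ℂ))}

/-- The regular character of `G`. -/
noncomputable def regChar : G → ℂ := fun g => if g = 1 then (Nat.card G : ℂ) else 0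

/-- The span `nontrivSpan G` enlarged by the regular character. -/
noncomputable def fullSpan : Submodule ℚ (G → ℂ) := nontrivSpan G ⊔ Submodule.span ℚ {regChar G}

variable {G}

/-- For `ψ = 1` and `σ ≠ 1` this uses that inducing the regular character of `⟨σ⟩`, which is the
sum of all its linear characters, gives the regular character of `G`. -/
lemma ind_mem_fullSpan (σ : G) (ψ : Subgroup.zpowers σ →* ℂˣ) :
    indClassFun (Subgroup.zpowers σ) (fun h => ((ψ h : ℂˣ) : ℂ)) ∈ fullSpan G := by
  have hreg : regChar G ∈ fullSpan G :=
    (le_sup_right : _ ≤ fullSpan G) (Submodule.subset_span rfl)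
  have hU : ∀ φ : Subgroup.zpowers σ →* ℂˣ, σ ≠ 1 → φ ≠ 1 →
      indClassFun (Subgroup.zpowers σ) (fun h => ((φ h : ℂˣ) : ℂ)) ∈ fullSpan G :=
    fun φ h1 h2 => (le_sup_left : _ ≤ fullSpan G) (Submodule.subset_span ⟨σ, φ, h1, h2, rfl⟩)
  by_cases hσ : σ = 1
  · subst hσ
    convert hreg using 1
    ext g
    rw [regChar, ← indClassFun_regular (Subgroup.zpowers (1 : G)) g]
    congr 1
    ext h
    have : h = 1 := by
      obtain ⟨h, hh⟩ := h
      simpa [Subtype.ext_iff] using hh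
    subst this
    simp
  by_cases hψ : ψ = 1
  · subst hψ
    have key : regChar G = ∑ φ : Subgroup.zpowers σ →* ℂˣ,
        indClassFun (Subgroup.zpowers σ) (fun h => ((φ h : ℂˣ) : ℂ)) := by
      ext g
      rw [regChar, ← indClassFun_regular (Subgroup.zpowers σ) g, Finset.sum_apply]
      have := indClassFun_sum (Subgroup.zpowers σ) (fun _ : Subgroup.zpowers σ →* ℂˣ => 1)
        (fun φ h => ((φ h : ℂˣ) : ℂ)) g
      simp only [one_mul] at this
      rw [← this]
      congr 1
      ext h
      convert (sum_linearChar_apply h).symm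
    rw [← Finset.add_sum_erase _ _ (Finset.mem_univ 1)] at key
    rw [← sub_eq_iff_eq_add] at key
    rw [← key]
    exact Submodule.sub_mem _ hreg
      (Submodule.sum_mem _ fun φ hφ => hU φ hσ (Finset.ne_of_mem_erase hφ))
  · exact hU ψ hσ hψ

/-- `χ · |⟨σ⟩| · Ind_{⟨σ⟩}^G 1 = |⟨σ⟩| · Ind_{⟨σ⟩}^G (χ|_{⟨σ⟩})`, and `χ|_{⟨σ⟩}` is a rational
combination of linear characters. -/
lemma char_mul_card_mem (V : FDRep ℂ G) (σ : G) :
    (fun g => V.character g *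
      ((Finset.univ.filter fun x : G => x * g * x⁻¹ ∈ Subgroup.zpowers σ).card : ℂ)) ∈
      fullSpan G := by
  obtain ⟨q, hq⟩ := exists_rat_character_eq (V.ρ.comp (Subgroup.zpowers σ).subtype)
  have hH : (Nat.card (Subgroup.zpowers σ) : ℂ) ≠ 0 := by exact_mod_cast Nat.card_pos.ne'
  have key : (fun g => V.character g *
      ((Finset.univ.filter fun x : G => x * g * x⁻¹ ∈ Subgroup.zpowers σ).card : ℂ)) =
      (Nat.card (Subgroup.zpowers σ) : ℚ) • ∑ ψ, q ψ •
        indClassFun (Subgroup.zpowers σ) (fun h => ((ψ h : ℂˣ) : ℂ)) := by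
    ext g
    simp only [Pi.smul_apply, Finset.sum_apply, Rat.smul_def]
    rw [← indClassFun_sum]
    simp_rw [← hq]
    rw [indClassFun]
    have : ∀ x : G, (if h : x * g * x⁻¹ ∈ Subgroup.zpowers σ then
        Representation.character (V.ρ.comp (Subgroup.zpowers σ).subtype) ⟨x * g * x⁻¹, h⟩ else 0) =
        if x * g * x⁻¹ ∈ Subgroup.zpowers σ then V.character g else 0 := by
      intro x
      split_ifs with h
      · exact FDRep.char_conj V g x
      · rfl
    simp_rw [this]
    rw [← Finset.sum_filter, Finset.sum_const, nsmul_eq_mul]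
    push_cast
    field_simp
  rw [key]
  exact Submodule.smul_mem _ _ (Submodule.sum_mem _ fun ψ _ =>
    Submodule.smul_mem _ _ (ind_mem_fullSpan σ ψ))

/-- The number of generators of the cyclic group `⟨σ⟩`. -/
noncomputable def genCount (σ : G) : ℕ :=
  (Finset.univ.filter fun τ : G => Subgroup.zpowers τ = Subgroup.zpowers σ).card

/-- The function `g ↦ χ(g) · #{x | ⟨x g x⁻¹⟩ = ⟨σ⟩}`. -/
noncomputable def genPart (χ : G → ℂ) (σ : G) : G → ℂ := fun g =>
  χ g * ((Finset.univ.filter fun x : G =>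
    Subgroup.zpowers (x * g * x⁻¹) = Subgroup.zpowers σ).card : ℂ)

/-- Summing `genPart χ τ` over the cyclic subgroups `⟨τ⟩` with a given property. The sum runs over
generators `τ`, so each subgroup is weighted by the inverse of its number of generators. -/
lemma sum_genPart (χ : G → ℂ) (P : Subgroup G → Prop) :
    (∑ τ : G, if P (Subgroup.zpowers τ) then (genCount τ : ℚ)⁻¹ • genPart χ τ else 0) =
    fun g => χ g *
      ((Finset.univ.filter fun x : G => P (Subgroup.zpowers (x * g * x⁻¹))).card : ℂ) := by
  have key : ∀ y : G, (∑ τ : G, if P (Subgroup.zpowers τ) then (genCount τ : ℂ)⁻¹ *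
      (if Subgroup.zpowers y = Subgroup.zpowers τ then 1 else 0) else 0) =
      if P (Subgroup.zpowers y) then 1 else 0 := by
    intro y
    have hy : (genCount y : ℂ) ≠ 0 := by
      have : 0 < genCount y := Finset.card_pos.2 ⟨y, by simp⟩
      exact_mod_cast this.ne'
    have h1 : ∀ τ : G, (if P (Subgroup.zpowers τ) then (genCount τ : ℂ)⁻¹ *
        (if Subgroup.zpowers y = Subgroup.zpowers τ then 1 else 0) else 0) =
        if Subgroup.zpowers τ = Subgroup.zpowers y then
          (if P (Subgroup.zpowers y) then (genCount y : ℂ)⁻¹ else 0) else 0 := by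
      intro τ
      by_cases h : Subgroup.zpowers τ = Subgroup.zpowers y
      · have : genCount τ = genCount y := by simp only [genCount, h]
        simp [h, this]
      · simp [h, Ne.symm h]
    rw [Finset.sum_congr rfl fun τ _ => h1 τ, ← Finset.sum_filter, Finset.sum_const, nsmul_eq_mul]
    change (genCount y : ℂ) * _ = _
    split_ifs <;> simp [hy]
  ext g
  have h2 : ∀ τ : G, (if P (Subgroup.zpowers τ) then
      (genCount τ : ℚ)⁻¹ • genPart χ τ else 0) g = χ g * ∑ x : G,
      if P (Subgroup.zpowers τ) then (genCount τ : ℂ)⁻¹ *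
      (if Subgroup.zpowers (x * g * x⁻¹) = Subgroup.zpowers τ then 1 else 0) else 0 := by
    intro τ
    split_ifs
    · rw [← Finset.mul_sum, Finset.sum_boole]
      simp only [genPart, Pi.smul_apply, Rat.smul_def]
      push_cast
      ring
    · simp
  rw [Finset.sum_apply, Finset.sum_congr rfl fun τ _ => h2 τ, ← Finset.mul_sum, Finset.sum_comm,
    Finset.sum_congr rfl fun x _ => key _, Finset.sum_boole]

/-- Möbius inversion over the cyclic subgroups, carried out as an induction: removing from
`χ · #{x | x g x⁻¹ ∈ ⟨σ⟩}` the contributions of the proper subgroups leaves `genPart χ σ`. -/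
lemma genPart_mem (V : FDRep ℂ G) (H : Subgroup G) :
    ∀ σ : G, Subgroup.zpowers σ = H → genPart V.character σ ∈ fullSpan G := by
  induction H using WellFoundedLT.induction with
  | ind H ih =>
    intro σ hσ
    subst hσ
    have h1 := char_mul_card_mem V σ
    have h2 : (∑ τ : G, if Subgroup.zpowers τ < Subgroup.zpowers σ then
        (genCount τ : ℚ)⁻¹ • genPart V.character τ else 0) ∈ fullSpan G := by
      refine Submodule.sum_mem _ fun τ _ => ?_
      split_ifs with h
      · exact Submodule.smul_mem _ _ (ih _ h τ rfl)
      · exact Submodule.zero_mem _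
    convert Submodule.sub_mem _ h1 h2 using 1
    rw [sum_genPart V.character (fun K => K < Subgroup.zpowers σ)]
    ext g
    simp only [genPart, Pi.sub_apply]
    rw [← mul_sub, eq_comm]
    congr 1
    rw [sub_eq_iff_eq_add]
    norm_cast
    rw [← Finset.card_union_of_disjoint]
    · congr 1
      ext x
      simp only [Finset.mem_filter, Finset.mem_univ, true_and, Finset.mem_union,
        ← Subgroup.zpowers_le]
      rw [le_iff_lt_or_eq, or_comm]
    · rw [Finset.disjoint_filter]
      intro x _ heq hlt
      exact hlt.ne heq

/-- Artin's induction theorem in weak form: the trivial `ψ` are still present, through the regular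
character in `fullSpan G`. -/
lemma character_mem_fullSpan (V : FDRep ℂ G) : V.character ∈ fullSpan G := by
  have hG : (Nat.card G : ℂ) ≠ 0 := by exact_mod_cast Nat.card_pos.ne'
  have h : ∑ τ : G, (genCount τ : ℚ)⁻¹ • genPart V.character τ ∈ fullSpan G :=
    Submodule.sum_mem _ fun τ _ => Submodule.smul_mem _ _ (genPart_mem V _ τ rfl)
  have e := sum_genPart V.character (fun _ : Subgroup G => True)
  simp only [if_true] at e
  rw [e] at h
  convert Submodule.smul_mem _ (Nat.card G : ℚ)⁻¹ h using 1
  ext g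
  simp [Rat.smul_def] at hG ⊢
  field_simp

/-! ### Eliminating the regular character -/

/-- A nontrivial irreducible character is orthogonal to the trivial one. -/
lemma sum_character_eq_zero (V : FDRep ℂ G) [Simple V] (hV : V.character ≠ fun _ => 1) :
    ∑ g, V.character g = 0 := by
  have hG : (Nat.card G : ℂ) ≠ 0 := by exact_mod_cast Nat.card_pos.ne'
  let _ : Invertible (Nat.card G : ℂ) := invertibleOfNonzero hG
  let T : FDRep ℂ G := FDRep.of (Representation.trivial ℂ G ℂ)
  have hT : T.character = fun _ => 1 := by
    ext g
    change LinearMap.trace ℂ ℂ (Representation.trivial ℂ G ℂ g) = 1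
    have : Representation.trivial ℂ G ℂ g = LinearMap.id := by ext; simp
    rw [this, LinearMap.trace_id]
    simp
  have : Simple T := by
    rw [FDRep.simple_iff_char_is_norm_one]
    simp [hT]
  have h := FDRep.char_orthonormal V T
  rw [if_neg] at h
  · simpa [hT] using h
  · rintro ⟨i⟩
    exact hV ((FDRep.char_iso i).trans hT)

lemma sum_eq_zero_of_mem_nontrivSpan {f : G → ℂ} (hf : f ∈ nontrivSpan G) : ∑ g, f g = 0 := by
  induction hf using Submodule.span_induction with
  | mem f hf =>
    obtain ⟨σ, ψ, -, hψ, rfl⟩ := hf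
    exact sum_indClassFun_eq_zero _ ψ hψ
  | zero => simp
  | add f g _ _ h1 h2 => simp [Finset.sum_add_distrib, h1, h2]
  | smul c f _ h => simp [← Finset.smul_sum, h]

lemma character_mem_nontrivSpan (V : FDRep ℂ G) [Simple V] (hV : V.character ≠ fun _ => 1) :
    V.character ∈ nontrivSpan G := by
  obtain ⟨u, hu, w, hw, h⟩ := Submodule.mem_sup.1 (character_mem_fullSpan V)
  obtain ⟨c, rfl⟩ := Submodule.mem_span_singleton.1 hw
  -- Summing over `G` kills `V.character` and `u`, but not the regular character.
  have h1 : ∑ g, V.character g = ∑ g, u g + c • ∑ g, regChar G g := by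
    rw [← h, Finset.smul_sum, ← Finset.sum_add_distrib]
    rfl
  rw [sum_character_eq_zero V hV, sum_eq_zero_of_mem_nontrivSpan hu] at h1
  have hc : c = 0 := by
    simpa [regChar, Rat.smul_def] using h1
  rw [← h, hc]
  simpa using hu

end Artin

/-- **Artin induction (solvability of the system (24)).** Every nontrivial irreducible complex
character `χ` of a finite group `G` is a rational linear combination of characters induced from
nontrivial degree-one characters `ψ` of the cyclic subgroups `⟨σ⟩`, `σ ≠ 1`. -/
theorem stmt_12 {G : Type} [Group G] [Fintype G]
    (V : FDRep ℂ G) [Simple V] (hV : V.character ≠ fun _ => 1) :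
    ∃ (n : ℕ) (σ : Fin n → G) (ψ : ∀ i, ↥(Subgroup.zpowers (σ i)) →* ℂˣ) (x : Fin n → ℚ),
      (∀ i, σ i ≠ 1) ∧ (∀ i, ψ i ≠ 1) ∧
      ∀ g : G, V.character g =
        ∑ i, (x i : ℂ) *
          indClassFun (Subgroup.zpowers (σ i)) (fun h => ((ψ i h : ℂˣ) : ℂ)) g := by
  obtain ⟨n, x, f, h⟩ := Submodule.mem_span_set'.1 (character_mem_nontrivSpan V hV)
  choose σ ψ h1 h2 h3 using fun i => (f i).2
  refine ⟨n, σ, ψ, x, h1, h2, fun g => ?_⟩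
  rw [← h, Finset.sum_apply]
  refine Finset.sum_congr rfl fun i _ => ?_
  rw [Pi.smul_apply, Rat.smul_def, h3 i]
end

section
/- (Linear independence underlying equations (25)) Let G be a finite group with irreducible complex characters χ^1, χ^2, …, χ^x, where χ^1 is the trivial character. For a nonidentity element σ ∈ G and a nontrivial degree-one character ψ of ⟨σ⟩, let r^{(σ)}_{ψ,ν} = ⟨Ind_{⟨σ⟩}^G ψ, χ^ν⟩ denote the multiplicity of χ^ν in the induced character. Suppose complex numbers y_2, …, y_x satisfy ∑_{ν=2}^x r^{(σ)}_{ψ,ν} · y_ν = 0 for every nonidentity σ ∈ G and every nontrivial degree-one character ψ of ⟨σ⟩. Then y_2 = y_3 = ⋯ = y_x = 0. -/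
/-!
Put `Φ = ∑ y_i conj χ_i`, a class function on `G`. By Frobenius reciprocity
(`sum_indClassFun_mul`) the hypothesis says that, for each `σ ≠ 1`, the restriction of `Φ` to `⟨σ⟩`
is orthogonal to every nontrivial character of `⟨σ⟩`; by Fourier inversion on the abelian group
`⟨σ⟩` (`eq_of_fourier`) this restriction is constant, so `Φ σ = Φ 1`. Hence `Φ` is constant on `G`,
and so is `conj Φ = ∑ conj y_i χ_i`. Pairing with `χ_j`, which is orthogonal to the constants
(`sum_char_inv_eq_zero`) and to the other `χ_i`, gives `conj y_j = 0`.
-/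

open CategoryTheory
open scoped Classical

/-- The standard inner product of class functions: `⟨f, g⟩ = (1/|G|) ∑_τ f τ * conj (g τ)`. -/
noncomputable def classInner {G : Type*} [Group G] [Fintype G] (f g : G → ℂ) : ℂ :=
  (Nat.card G : ℂ)⁻¹ * ∑ τ : G, f τ * (starRingEnd ℂ) (g τ)

/-- Fourier inversion on a finite abelian group: a function orthogonal to every nontrivial
character equals its mean value everywhere. -/
lemma eq_of_fourier {H : Type*} [CommGroup H] [Fintype H] (f : H → ℂ)
    (hf : ∀ ψ : H →* ℂˣ, ψ ≠ 1 → ∑ h, (ψ h : ℂ) * f h = 0) (a : H) :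
    (Fintype.card H : ℂ) * f a = ∑ h, f h := by
  have hA : ∀ χ : AddChar (Additive H) ℂ, χ ≠ 0 →
      ∑ h : H, χ (Additive.ofMul h) * f h = 0 := by
    intro χ hχ
    let ψ : H →* ℂˣ := MonoidHom.toHomUnits
      { toFun := fun h => χ (Additive.ofMul h)
        map_one' := by simp
        map_mul' := fun x y => by simp [AddChar.map_add_eq_mul] }
    have hψ : ∀ h, (ψ h : ℂ) = χ (Additive.ofMul h) := fun h => rfl
    have := hf ψ (fun h1 => hχ <| by
      ext x
      have := hψ x.toMul
      rw [h1] at this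
      simpa using this.symm)
    simpa [hψ] using this
  -- Evaluate the double sum `∑_χ ∑_h χ(h a⁻¹) f(h)` in both orders.
  have h1 : ∑ χ : AddChar (Additive H) ℂ, ∑ h : H, χ (Additive.ofMul (h * a⁻¹)) * f h
      = ∑ h, f h := by
    rw [Finset.sum_eq_single 0]
    · simp
    · intro χ _ hχ
      have := hA χ hχ
      calc _ = χ (Additive.ofMul a⁻¹) * ∑ h : H, χ (Additive.ofMul h) * f h := by
            rw [Finset.mul_sum]
            refine Finset.sum_congr rfl fun h _ => ?_
            rw [ofMul_mul, AddChar.map_add_eq_mul]; ring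
        _ = 0 := by rw [this, mul_zero]
    · simp
  rw [← h1, Finset.sum_comm, Finset.sum_eq_single a]
  · simp
  · intro h _ hh
    have : Additive.ofMul (h * a⁻¹) ≠ 0 := by
      intro h0
      exact hh (mul_inv_eq_one.mp h0)
    rw [← Finset.sum_mul, AddChar.sum_apply_eq_ite, if_neg this, zero_mul]
  · simp

/-- Frobenius reciprocity, in unnormalised form. -/
lemma sum_indClassFun_mul {G : Type*} [Group G] [Fintype G] (H : Subgroup G) (ψ : H → ℂ)
    (Φ : G → ℂ) (hΦ : ∀ x g, Φ (x * g * x⁻¹) = Φ g) :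
    ∑ τ, indClassFun H ψ τ * Φ τ
      = (Nat.card H : ℂ)⁻¹ * (Nat.card G * ∑ h : H, ψ h * Φ h) := by
  have key : ∀ x : G, ∑ g : G,
      (if h : x * g * x⁻¹ ∈ H then ψ ⟨x * g * x⁻¹, h⟩ else 0) * Φ g = ∑ h : H, ψ h * Φ h := by
    intro x
    calc _ = ∑ g : G, (if h : g ∈ H then ψ ⟨g, h⟩ else 0) * Φ g := by
          refine Fintype.sum_equiv (MulAut.conj x).toEquiv _ _ fun g => ?_
          change _ = (if h : x * g * x⁻¹ ∈ H then ψ ⟨x * g * x⁻¹, h⟩ else 0) * Φ (x * g * x⁻¹)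
          rw [hΦ]
      _ = ∑ g : G, if h : g ∈ H then ψ ⟨g, h⟩ * Φ g else 0 := by
          refine Finset.sum_congr rfl fun g _ => ?_
          split_ifs <;> simp
      _ = _ := by
          rw [Finset.sum_dite]
          simp only [Finset.sum_const_zero, add_zero]
          refine Finset.sum_bij' (fun g _ => ⟨g.1, (Finset.mem_filter.mp g.2).2⟩)
            (fun h _ => ⟨h.1, by simp⟩) ?_ ?_ ?_ ?_ ?_ <;> simp
  simp only [indClassFun, mul_assoc, Finset.sum_mul, ← Finset.mul_sum]
  simp only [mul_assoc] at key
  rw [Finset.sum_comm, Finset.sum_congr rfl fun x _ => key x]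
  simp

/-- The average of a nontrivial irreducible character vanishes. -/
lemma sum_char_inv_eq_zero {G : Type} [Group G] [Fintype G] (V : FDRep ℂ G) [Simple V]
    (hV : V.character ≠ fun _ => 1) : ∑ g : G, V.character g⁻¹ = 0 := by
  have hchar : (FDRep.of (Representation.trivial ℂ G ℂ)).character = fun _ => 1 := by
    ext g
    change LinearMap.trace ℂ ℂ (Representation.trivial ℂ G ℂ g) = 1
    simp [Representation.trivial]
  have hG : (Nat.card G : ℂ) ≠ 0 := by simp
  have : NeZero (Nat.card G : ℂ) := ⟨hG⟩
  have : Invertible (Nat.card G : ℂ) := invertibleOfNonzero hG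
  have : Simple (FDRep.of (Representation.trivial ℂ G ℂ)) := by
    rw [FDRep.simple_iff_char_is_norm_one, hchar]
    simp
  have h := FDRep.char_orthonormal (FDRep.of (Representation.trivial ℂ G ℂ)) V
  rw [if_neg, hchar] at h
  · simpa using h
  · rintro ⟨i⟩
    exact hV ((FDRep.char_iso i).symm.trans hchar)

/-- **Linear independence underlying the equations (25).** Let `χ^2, …, χ^x` be distinct
nontrivial irreducible characters of `G` and `r^{(σ)}_{ψ,ν} = ⟨Ind_{⟨σ⟩}^G ψ, χ^ν⟩` the
multiplicity of `χ^ν` in the character induced from a nontrivial degree-one character `ψ` of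
`⟨σ⟩`, `σ ≠ 1`.  If `∑_ν r^{(σ)}_{ψ,ν} y_ν = 0` for all such `(σ, ψ)` then all `y_ν = 0`. -/
theorem stmt_13 {G : Type} [Group G] [Fintype G] (n : ℕ)
    (W : Fin n → FDRep ℂ G) (hsimple : ∀ i, Simple (W i))
    (hdistinct : ∀ i j, i ≠ j → (W i).character ≠ (W j).character)
    (hnontriv : ∀ i, (W i).character ≠ fun _ => 1)
    (y : Fin n → ℂ)
    (hy : ∀ σ : G, σ ≠ 1 → ∀ ψ : ↥(Subgroup.zpowers σ) →* ℂˣ, ψ ≠ 1 →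
      ∑ i, classInner (indClassFun (Subgroup.zpowers σ) (fun h => ((ψ h : ℂˣ) : ℂ)))
        ((W i).character) * y i = 0) :
    ∀ i, y i = 0 := by
  have hG : (Nat.card G : ℂ) ≠ 0 := by simp
  have : Invertible (Nat.card G : ℂ) := invertibleOfNonzero hG
  set Φ : G → ℂ := fun τ => ∑ i, (starRingEnd ℂ) ((W i).character τ) * y i with hΦdef
  have hΦ : ∀ x g, Φ (x * g * x⁻¹) = Φ g := fun x g => by simp [hΦdef]
  -- `Φ` is constant on every cyclic subgroup, hence on `G`.
  have hconst : ∀ σ, Φ σ = Φ 1 := by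
    intro σ
    by_cases hσ : σ = 1
    · rw [hσ]
    have hf : ∀ ψ : ↥(Subgroup.zpowers σ) →* ℂˣ, ψ ≠ 1 →
        ∑ h, (ψ h : ℂ) * Φ h = 0 := by
      intro ψ hψ
      have h1 := hy σ hσ ψ hψ
      have h2 : ∑ τ, indClassFun (Subgroup.zpowers σ) (fun h => ((ψ h : ℂˣ) : ℂ)) τ * Φ τ
          = 0 := by
        simp only [classInner, mul_assoc, Finset.sum_mul, ← Finset.mul_sum] at h1
        rw [Finset.sum_comm] at h1
        simp only [hΦdef, Finset.mul_sum]
        simpa using h1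
      rw [sum_indClassFun_mul _ _ _ hΦ] at h2
      simpa using h2
    let : CommGroup (Subgroup.zpowers σ) :=
      { (inferInstance : Group (Subgroup.zpowers σ)) with
        mul_comm := fun a b => mul_comm' a b }
    have e := eq_of_fourier (H := Subgroup.zpowers σ) (fun h => Φ h) hf
    have e1 := (e ⟨σ, Subgroup.mem_zpowers σ⟩).trans (e 1).symm
    exact mul_left_cancel₀ (by simp) e1
  intro j
  have := hsimple
  -- Pair `conj Φ = ∑ conj (y i) χ_i`, a constant function, with `χ_j`.
  have horth : ∀ i, ∑ g : G, (W i).character g * (W j).character g⁻¹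
      = if i = j then (Nat.card G : ℂ) else 0 := by
    intro i
    have h := FDRep.char_orthonormal (W i) (W j)
    rw [inv_mul_eq_iff_eq_mul₀ hG] at h
    rw [h]
    by_cases hij : i = j
    · subst hij
      rw [if_pos ⟨Iso.refl _⟩]; simp
    · rw [if_neg, if_neg hij, mul_zero]
      rintro ⟨e⟩
      exact hdistinct i j hij (FDRep.char_iso e)
  have h1 : ∑ g : G, (starRingEnd ℂ) (Φ g) * (W j).character g⁻¹ = 0 := by
    simp only [hconst, ← Finset.mul_sum]
    rw [sum_char_inv_eq_zero (W j) (hnontriv j), mul_zero]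
  have h2 : ∑ g : G, (starRingEnd ℂ) (Φ g) * (W j).character g⁻¹
      = ∑ i, (starRingEnd ℂ) (y i) * ∑ g : G, (W i).character g * (W j).character g⁻¹ := by
    simp only [hΦdef, map_sum, map_mul, Complex.conj_conj, Finset.sum_mul, Finset.mul_sum]
    rw [Finset.sum_comm]
    refine Finset.sum_congr rfl fun i _ => Finset.sum_congr rfl fun g _ => by ring
  rw [h2] at h1
  simpa [horth] using h1
end

section
/- Suppose L₁, L̃₁, L₂, L̃₂ are nonzero meromorphic functions on ℂ satisfying: (i) L_i(s)/L̃_i(1−s) = a_i · A_i^s · Γ(s)^{n_i^{(1)}} · (cos(sπ/2))^{n_i^{(2)}} · (sin(sπ/2))^{n_i^{(3)}} for i = 1, 2, where a_i ∈ ℂ are nonzero, n_i^{(1)}, n_i^{(2)}, n_i^{(3)} ∈ ℤ, and A_i are positive real constants; and (ii) L₂(s) = P(s)·L₁(s) and L̃₂(s) = P̃(s)·L̃₁(s), where P(s) = ∏_{i=1}^e (1 − ε_i p_i^{−s})^{u_i} and P̃(s) = ∏_{i=1}^e (1 − conj(ε_i) p_i^{−s})^{u_i}, with (ε_i, p_i)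 pairwise distinct pairs consisting of a root of unity ε_i ∈ ℂ and a prime number p_i, and u_i ∈ ℤ. Then L₁(s) = L₂(s) as meromorphic functions. -/
/-!
Dividing the two functional equations by each other gives, off a countable set,
`P(s) · F₁(s) = F₂(s) · P̃(1 - s)`, where `F_k(s) = a_k A_k^s Γ(s)^* cos(πs/2)^* sin(πs/2)^*`.
On the imaginary axis minus the origin both `F_k` are holomorphic and nonvanishing, and so is
`P̃(1 - s)`, whose zeros and poles lie on `Re s = 1`. On the other hand, for each index `i` there is
a point `s₀ = i t`, `t > 0`, with `ε_i p_i^{-s₀} = 1` (`exists_zero_on_axis`), and no other factor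
of `P` vanishes there: for the same prime this is distinctness of the pairs, and for different
primes it is the irrationality of `log p / log q` (`prime_eq_of_common_zero`). Hence `P` has order
exactly `u_i` at `s₀`, which forces `u_i = 0`. So all exponents vanish, `P = 1` and `L₂ = L₁`.
-/


open Complex

/-- `f` is a nonzero meromorphic function on `ℂ`: it does not vanish identically off any
countable set (equivalently, it is not the zero meromorphic function). -/
def MeroNonzero (f : ℂ → ℂ) : Prop :=
  ∀ E : Set ℂ, E.Countable → ∃ s ∉ E, f s ≠ 0

/-- Two functions agree as meromorphic functions on `ℂ`: they agree off some countable set. -/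
def MeroEq (f g : ℂ → ℂ) : Prop :=
  ∃ E : Set ℂ, E.Countable ∧ ∀ s ∉ E, f s = g s

open Filter Topology

/-- A nonzero meromorphic function on `ℂ` has no accumulation point of zeros. -/
lemma MeroNonzero.eventually_ne_zero {f : ℂ → ℂ} (hf : MeromorphicOn f Set.univ)
    (hnz : MeroNonzero f) (z : ℂ) : ∀ᶠ s in 𝓝[≠] z, f s ≠ 0 := by
  have hz : MeromorphicAt f z := hf z trivial
  rw [← meromorphicOrderAt_ne_top_iff_eventually_ne_zero hz]
  have key := Meromorphic.exists_meromorphicOrderAt_ne_top_iff_forall (meromorphicOn_univ.1 hf)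
  refine key.1 ?_ z
  by_contra! hall
  -- If `f` vanishes on a punctured neighbourhood of every point, countably many of these
  -- neighbourhoods cover `ℂ`, so that `f` vanishes off the countable set of their centres.
  have hnhds : ∀ x : ℂ, {y | y ≠ x → f y = 0} ∈ 𝓝 x := fun x =>
    eventually_nhdsWithin_iff.1 (meromorphicOrderAt_eq_top_iff.1 (hall x))
  obtain ⟨c, hc, hcover⟩ := TopologicalSpace.countable_cover_nhds hnhds
  obtain ⟨s, hs, hfs⟩ := hnz c hc
  obtain ⟨x, hx, hsx⟩ := Set.mem_iUnion₂.1 (hcover.ge (Set.mem_univ s))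
  exact hfs (hsx fun h => hs (h ▸ hx))

lemma natCast_cpow_neg_mul_I {p : ℕ} (hp : p.Prime) (t : ℝ) :
    (p : ℂ) ^ (-((t : ℂ) * I)) = Complex.exp (-((t * Real.log p : ℝ) * I)) := by
  rw [Complex.cpow_def_of_ne_zero (by exact_mod_cast hp.ne_zero), ← Complex.natCast_log]
  congr 1
  push_cast
  ring

/-- The factor `1 - ε p^{-s}` vanishes at some point of the positive imaginary axis. -/
lemma exists_zero_on_axis {ε : ℂ} {p : ℕ} (hp : p.Prime) (hε : ∃ N : ℕ, 0 < N ∧ ε ^ N = 1) :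
    ∃ t : ℝ, 0 < t ∧ ε * (p : ℂ) ^ (-((t : ℂ) * I)) = 1 := by
  obtain ⟨N, hN, hεN⟩ := hε
  have hnorm : ‖ε‖ = 1 := Complex.norm_eq_one_of_pow_eq_one hεN hN.ne'
  have hlog : 0 < Real.log p := Real.log_pos (by exact_mod_cast hp.one_lt)
  refine ⟨(ε.arg + 2 * Real.pi) / Real.log p, ?_, ?_⟩
  · have := Complex.neg_pi_lt_arg ε
    have := Real.pi_pos
    apply div_pos _ hlog
    linarith
  · rw [natCast_cpow_neg_mul_I hp, div_mul_cancel₀ _ hlog.ne']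
    have h := Complex.norm_mul_exp_arg_mul_I ε
    rw [hnorm, ofReal_one, one_mul] at h
    nth_rewrite 1 [← h]
    rw [← Complex.exp_add, Complex.exp_eq_one_iff]
    exact ⟨-1, by push_cast; ring⟩

/-- If `ε p^{-it} = 1` with `ε` a root of unity and `t > 0`, then `t log p` is a positive rational
multiple of `2π`. -/
lemma exists_nat_mul_log {ε : ℂ} {p : ℕ} (hp : p.Prime) {t : ℝ} (ht : 0 < t)
    (hε : ∃ N : ℕ, 0 < N ∧ ε ^ N = 1) (h : ε * (p : ℂ) ^ (-((t : ℂ) * I)) = 1) :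
    ∃ N m : ℕ, 0 < N ∧ 0 < m ∧ N * (t * Real.log p) = m * (2 * Real.pi) := by
  obtain ⟨N, hN, hεN⟩ := hε
  have hlog : 0 < Real.log p := Real.log_pos (by exact_mod_cast hp.one_lt)
  rw [natCast_cpow_neg_mul_I hp] at h
  have h1 := congrArg (· ^ N) h
  simp only [mul_pow, hεN, one_mul, one_pow, ← Complex.exp_nat_mul] at h1
  obtain ⟨n, hn⟩ := Complex.exp_eq_one_iff.1 h1
  have h2 : (N : ℝ) * (t * Real.log p) = (-n : ℤ) * (2 * Real.pi) := by
    have := congrArg Complex.im hn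
    simp [Complex.log_re] at this
    push_cast
    linarith
  have hN' : (0 : ℝ) < N := by exact_mod_cast hN
  have hpos : 0 < ((-n : ℤ) : ℝ) * (2 * Real.pi) := h2 ▸ by positivity
  have hn0 : 0 < -n := by
    have := pos_of_mul_pos_left hpos (by positivity)
    exact_mod_cast this
  lift -n to ℕ using hn0.le with m
  exact ⟨N, m, hN, by exact_mod_cast hn0, by exact_mod_cast h2⟩

/-- Two factors `1 - ε p^{-s}`, `1 - δ q^{-s}` with a common zero on the positive imaginary axis
belong to the same prime. -/
lemma prime_eq_of_common_zero {ε δ : ℂ} {p q : ℕ} (hp : p.Prime) (hq : q.Prime) {t : ℝ}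
    (ht : 0 < t) (hε : ∃ N : ℕ, 0 < N ∧ ε ^ N = 1) (hδ : ∃ N : ℕ, 0 < N ∧ δ ^ N = 1)
    (h₁ : ε * (p : ℂ) ^ (-((t : ℂ) * I)) = 1) (h₂ : δ * (q : ℂ) ^ (-((t : ℂ) * I)) = 1) :
    p = q := by
  obtain ⟨N, m, hN, hm, h⟩ := exists_nat_mul_log hp ht hε h₁
  obtain ⟨M, n, hM, hn, h'⟩ := exists_nat_mul_log hq ht hδ h₂
  -- Eliminating `2π` and `t`: `N n log p = M m log q`.
  have hlog : ((N * n : ℕ) : ℝ) * Real.log p = ((M * m : ℕ) : ℝ) * Real.log q := by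
    apply mul_left_cancel₀ ht.ne'
    push_cast
    linear_combination (n : ℝ) * h - (m : ℝ) * h'
  rw [← Real.log_pow, ← Real.log_pow] at hlog
  have hpow : (p : ℝ) ^ (N * n) = (q : ℝ) ^ (M * m) :=
    Real.log_injOn_pos (Set.mem_Ioi.2 (pow_pos (by exact_mod_cast hp.pos) _))
      (Set.mem_Ioi.2 (pow_pos (by exact_mod_cast hq.pos) _)) hlog
  have hpow' : p ^ (N * n) = q ^ (M * m) := by exact_mod_cast hpow
  have hdvd : p ∣ q ^ (M * m) := hpow' ▸ dvd_pow_self p (by positivity)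
  exact (Nat.prime_dvd_prime_iff_eq hp hq).1 (hp.dvd_of_dvd_pow hdvd)

lemma continuous_natCast_cpow_neg {p : ℕ} (hp : p.Prime) :
    Continuous fun s : ℂ => (p : ℂ) ^ (-s) :=
  continuous_neg.const_cpow (Or.inl (by exact_mod_cast hp.ne_zero))

/-- The gamma factor of the functional equation is continuous and nonzero off the real axis. -/
lemma gammaFactor_regular {a : ℂ} (ha : a ≠ 0) {A : ℝ} (hA : 0 < A) (n : Fin 3 → ℤ) {s₀ : ℂ}
    (hs₀ : s₀.im ≠ 0) :
    ContinuousAt (fun s : ℂ => a * (A : ℂ) ^ s * Complex.Gamma s ^ (n 0) *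
        Complex.cos (s * Real.pi / 2) ^ (n 1) * Complex.sin (s * Real.pi / 2) ^ (n 2)) s₀ ∧
      a * (A : ℂ) ^ s₀ * Complex.Gamma s₀ ^ (n 0) *
        Complex.cos (s₀ * Real.pi / 2) ^ (n 1) * Complex.sin (s₀ * Real.pi / 2) ^ (n 2) ≠ 0 := by
  have hA' : (A : ℂ) ≠ 0 := by exact_mod_cast hA.ne'
  have hint : ∀ m : ℕ, s₀ ≠ -m := fun m h => hs₀ (by simp [h])
  have him : (s₀ * Real.pi / 2).im ≠ 0 := by
    have : (s₀ * Real.pi / 2).im = s₀.im * Real.pi / 2 := by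
      simp
    rw [this]
    have := Real.pi_ne_zero
    positivity
  have hΓ := Complex.Gamma_ne_zero hint
  have hcos : Complex.cos (s₀ * Real.pi / 2) ≠ 0 := by
    rw [Complex.cos_ne_zero_iff]
    intro k h
    apply him
    rw [h, show ((2 * k + 1) * Real.pi / 2 : ℂ) = (((2 * k + 1) * Real.pi / 2 : ℝ) : ℂ) by
      push_cast; ring, ofReal_im]
  have hsin : Complex.sin (s₀ * Real.pi / 2) ≠ 0 := by
    rw [Complex.sin_ne_zero_iff]
    intro k h
    apply him
    rw [h, show (k * Real.pi : ℂ) = ((k * Real.pi : ℝ) : ℂ) by push_cast; ring, ofReal_im]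
  constructor
  · have c1 : ContinuousAt (fun s : ℂ => (A : ℂ) ^ s) s₀ := continuousAt_const_cpow hA'
    have c2 : ContinuousAt Complex.Gamma s₀ :=
      (Complex.differentiableAt_Gamma s₀ hint).continuousAt
    have c3 : ContinuousAt (fun s : ℂ => Complex.cos (s * Real.pi / 2)) s₀ := by fun_prop
    have c4 : ContinuousAt (fun s : ℂ => Complex.sin (s * Real.pi / 2)) s₀ := by fun_prop
    exact (((continuousAt_const.mul c1).mul (c2.zpow₀ _ (Or.inl hΓ))).mul
      (c3.zpow₀ _ (Or.inl hcos))).mul (c4.zpow₀ _ (Or.inl hsin))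
  · have : (A : ℂ) ^ s₀ ≠ 0 := by simp [Complex.cpow_eq_zero_iff, hA']
    have := zpow_ne_zero (n 0) hΓ
    have := zpow_ne_zero (n 1) hcos
    have := zpow_ne_zero (n 2) hsin
    simp_all

/-- If `x(s)^k · g(s) = h(s)` at points accumulating at `s₀`, where `x` vanishes at `s₀` while `g`
and `h` do not, then `k = 0`. -/
lemma zpow_exponent_eq_zero {x g h : ℂ → ℂ} {s₀ : ℂ} {l : Filter ℂ} [l.NeBot] (hl : l ≤ 𝓝 s₀)
    {k : ℤ} (hx : ContinuousAt x s₀) (hg : ContinuousAt g s₀) (hh : ContinuousAt h s₀)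
    (hx₀ : x s₀ = 0) (hg₀ : g s₀ ≠ 0) (hh₀ : h s₀ ≠ 0) (heq : ∀ᶠ s in l, x s ^ k * g s = h s) :
    k = 0 := by
  rcases lt_trichotomy k 0 with hk | hk | hk
  · have hc : ContinuousAt (fun s => x s ^ (-k) * h s) s₀ :=
      (hx.zpow₀ _ (Or.inr (by lia))).mul hh
    have heq' : g =ᶠ[l] fun s => x s ^ (-k) * h s := by
      filter_upwards [heq, hl (hh.eventually_ne hh₀)] with s hs hhs
      have hxs : x s ≠ 0 := by
        intro h0
        rw [h0, zero_zpow k hk.ne, zero_mul] at hs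
        exact hhs hs.symm
      rw [← hs, ← mul_assoc, ← zpow_add₀ hxs]
      simp
    have := tendsto_nhds_unique ((hg.tendsto.mono_left hl).congr' heq') (hc.tendsto.mono_left hl)
    rw [hx₀, zero_zpow _ (by lia), zero_mul] at this
    exact absurd this hg₀
  · exact hk
  · have hc : ContinuousAt (fun s => x s ^ k * g s) s₀ :=
      (hx.zpow₀ _ (Or.inr hk.le)).mul hg
    have := tendsto_nhds_unique ((hc.tendsto.mono_left hl).congr' heq) (hh.tendsto.mono_left hl)
    simp only [hx₀, zero_zpow _ hk.ne', zero_mul] at this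
    exact absurd this.symm hh₀

/-- **Rigidity of the functional equation (Lemma `fixingL_lemma`).**  If `L₁, L̃₁, L₂, L̃₂` are
nonzero meromorphic functions on `ℂ`, each pair satisfying a functional equation
`L_i(s) = a_i A_i^s Γ(s)^{n₁} cos(sπ/2)^{n₂} sin(sπ/2)^{n₃} L̃_i(1-s)`, and `L₂ = P·L₁`,
`L̃₂ = P̃·L̃₁` for finite Euler-type products `P, P̃` built from distinct pairs `(ε_i, p_i)` of
roots of unity and primes, then `L₁ = L₂` as meromorphic functions. -/
theorem stmt_14 (L₁ Lt₁ L₂ Lt₂ : ℂ → ℂ)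
    (hL₁ : MeromorphicOn L₁ Set.univ) (hLt₁ : MeromorphicOn Lt₁ Set.univ)
    (hL₂ : MeromorphicOn L₂ Set.univ) (hLt₂ : MeromorphicOn Lt₂ Set.univ)
    (hnz₁ : MeroNonzero L₁) (hnzt₁ : MeroNonzero Lt₁)
    (hnz₂ : MeroNonzero L₂) (hnzt₂ : MeroNonzero Lt₂)
    (a₁ a₂ : ℂ) (ha₁ : a₁ ≠ 0) (ha₂ : a₂ ≠ 0)
    (A₁ A₂ : ℝ) (hA₁ : 0 < A₁) (hA₂ : 0 < A₂)
    (n₁ : Fin 3 → ℤ) (n₂ : Fin 3 → ℤ)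
    -- (i): the functional equations, as equalities of meromorphic functions
    (hfe₁ : ∃ E : Set ℂ, E.Countable ∧ ∀ s ∉ E,
      L₁ s = a₁ * (A₁ : ℂ) ^ s * Complex.Gamma s ^ (n₁ 0) *
        Complex.cos (s * Real.pi / 2) ^ (n₁ 1) * Complex.sin (s * Real.pi / 2) ^ (n₁ 2) *
        Lt₁ (1 - s))
    (hfe₂ : ∃ E : Set ℂ, E.Countable ∧ ∀ s ∉ E,
      L₂ s = a₂ * (A₂ : ℂ) ^ s * Complex.Gamma s ^ (n₂ 0) *
        Complex.cos (s * Real.pi / 2) ^ (n₂ 1) * Complex.sin (s * Real.pi / 2) ^ (n₂ 2) *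
        Lt₂ (1 - s))
    -- (ii): the Euler-type factors relating the two pairs
    (e : ℕ) (ε : Fin e → ℂ) (p : Fin e → ℕ) (u : Fin e → ℤ)
    (hεroot : ∀ i, ∃ N : ℕ, 0 < N ∧ ε i ^ N = 1)
    (hp : ∀ i, Nat.Prime (p i))
    (hdistinct : Function.Injective fun i => (ε i, p i))
    (hP : ∃ E : Set ℂ, E.Countable ∧ ∀ s ∉ E,
      L₂ s = (∏ i, (1 - ε i * (p i : ℂ) ^ (-s)) ^ (u i)) * L₁ s)
    (hPt : ∃ E : Set ℂ, E.Countable ∧ ∀ s ∉ E,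
      Lt₂ s = (∏ i, (1 - (starRingEnd ℂ) (ε i) * (p i : ℂ) ^ (-s)) ^ (u i)) * Lt₁ s) :
    MeroEq L₁ L₂ := by
  obtain ⟨E₁, hE₁, hfe₁⟩ := hfe₁
  obtain ⟨E₂, hE₂, hfe₂⟩ := hfe₂
  obtain ⟨E₃, hE₃, hP⟩ := hP
  obtain ⟨E₄, hE₄, hPt⟩ := hPt
  suffices hu : ∀ i, u i = 0 by
    refine ⟨E₃, hE₃, fun s hs => ?_⟩
    rw [hP s hs]
    simp [hu]
  intro i
  obtain ⟨t, ht, hti⟩ := exists_zero_on_axis (hp i) (hεroot i)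
  set s₀ : ℂ := (t : ℂ) * I with hs₀
  have him : s₀.im ≠ 0 := by simp [hs₀, ht.ne']
  have hre : s₀.re = 0 := by simp [hs₀]
  obtain ⟨hF₁c, hF₁0⟩ := gammaFactor_regular ha₁ hA₁ n₁ him
  obtain ⟨hF₂c, hF₂0⟩ := gammaFactor_regular ha₂ hA₂ n₂ him
  -- The other factors of `P` do not vanish at `s₀`.
  have hother : ∀ j ∈ Finset.univ.erase i, 1 - ε j * (p j : ℂ) ^ (-s₀) ≠ 0 := by
    intro j hj h0
    have htj : ε j * (p j : ℂ) ^ (-s₀) = 1 := (sub_eq_zero.1 h0).symm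
    have hpp := prime_eq_of_common_zero (hp i) (hp j) ht (hεroot i) (hεroot j) hti htj
    rw [hpp] at hti
    have hεε : ε j = ε i := by
      refine mul_right_cancel₀ (b := (p j : ℂ) ^ (-s₀)) ?_ (htj.trans hti.symm)
      exact right_ne_zero_of_mul (htj ▸ one_ne_zero)
    exact (Finset.ne_of_mem_erase hj) (hdistinct (Prod.ext hεε hpp.symm))
  -- The factors of `P̃(1 - s)` do not vanish at `s₀`, since `|p^{-(1 - s₀)}| = 1 / p < 1`.
  have htilde : ∀ j ∈ Finset.univ, 1 - (starRingEnd ℂ) (ε j) * (p j : ℂ) ^ (-(1 - s₀)) ≠ 0 := by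
    intro j _ h0
    obtain ⟨N, hN, hεN⟩ := hεroot j
    have h1 := congrArg norm (sub_eq_zero.1 h0)
    rw [norm_mul, RCLike.norm_conj, Complex.norm_eq_one_of_pow_eq_one hεN hN.ne', one_mul,
      Complex.norm_natCast_cpow_of_pos (hp j).pos, norm_one] at h1
    have h2 : (p j : ℝ) ^ (-(1 - s₀)).re < 1 :=
      Real.rpow_lt_one_of_one_lt_of_neg (by exact_mod_cast (hp j).one_lt) (by simp [hre])
    exact h2.ne h1.symm
  -- Exclude the exceptional sets, and `s₀` itself, near which `L̃₁(1 - s)` has no other zero.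
  set E : Set ℂ := E₁ ∪ E₂ ∪ E₃ ∪ (fun s => 1 - s) ⁻¹' E₄ ∪ {s₀} with hE
  have hEc : E.Countable :=
    (((hE₁.union hE₂).union hE₃).union (hE₄.preimage sub_right_injective)).union
      (Set.countable_singleton s₀)
  have : (𝓝[Eᶜ] s₀).NeBot := mem_closure_iff_nhdsWithin_neBot.1 ((hEc.dense_compl ℂ) s₀)
  have hLne : ∀ᶠ s in 𝓝[Eᶜ] s₀, Lt₁ (1 - s) ≠ 0 := by
    have htends : Tendsto (fun s : ℂ => 1 - s) (𝓝[Eᶜ] s₀) (𝓝[≠] (1 - s₀)) := by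
      refine tendsto_nhdsWithin_iff.2 ⟨?_, ?_⟩
      · exact ((continuous_const.sub continuous_id).tendsto s₀).mono_left nhdsWithin_le_nhds
      · filter_upwards [self_mem_nhdsWithin] with s hs h
        exact hs (Or.inr (sub_right_injective h))
    exact htends.eventually (hnzt₁.eventually_ne_zero hLt₁ (1 - s₀))
  refine zpow_exponent_eq_zero (l := 𝓝[Eᶜ] s₀) (s₀ := s₀) nhdsWithin_le_nhds
    (x := fun s => 1 - ε i * (p i : ℂ) ^ (-s))
    (g := fun s => (∏ j ∈ Finset.univ.erase i, (1 - ε j * (p j : ℂ) ^ (-s)) ^ (u j)) *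
      (a₁ * (A₁ : ℂ) ^ s * Complex.Gamma s ^ (n₁ 0) *
        Complex.cos (s * Real.pi / 2) ^ (n₁ 1) * Complex.sin (s * Real.pi / 2) ^ (n₁ 2)))
    (h := fun s => (a₂ * (A₂ : ℂ) ^ s * Complex.Gamma s ^ (n₂ 0) *
        Complex.cos (s * Real.pi / 2) ^ (n₂ 1) * Complex.sin (s * Real.pi / 2) ^ (n₂ 2)) *
      ∏ j, (1 - (starRingEnd ℂ) (ε j) * (p j : ℂ) ^ (-(1 - s))) ^ (u j))
    ?_ ?_ ?_ ?_ ?_ ?_ ?_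
  · have := continuous_natCast_cpow_neg (hp i)
    exact (continuous_const.sub (continuous_const.mul this)).continuousAt
  · refine ContinuousAt.mul (tendsto_finsetProd _ fun j hj => ?_) hF₁c
    have := continuous_natCast_cpow_neg (hp j)
    exact ((continuous_const.sub (continuous_const.mul this)).continuousAt).zpow₀ _
      (Or.inl (hother j hj))
  · refine ContinuousAt.mul hF₂c (tendsto_finsetProd _ fun j hj => ?_)
    have := (continuous_natCast_cpow_neg (hp j)).comp
      (continuous_const.sub continuous_id : Continuous fun s : ℂ => 1 - s)
    exact ((continuous_const.sub (continuous_const.mul this)).continuousAt).zpow₀ _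
      (Or.inl (htilde j hj))
  · exact sub_eq_zero.2 hti.symm
  · exact mul_ne_zero (Finset.prod_ne_zero_iff.2 fun j hj => zpow_ne_zero _ (hother j hj)) hF₁0
  · exact mul_ne_zero hF₂0 (Finset.prod_ne_zero_iff.2 fun j hj => zpow_ne_zero _ (htilde j hj))
  · filter_upwards [hLne, self_mem_nhdsWithin] with s hL hs
    simp only [hE, Set.mem_compl_iff, Set.mem_union, Set.mem_preimage, not_or] at hs
    obtain ⟨⟨⟨⟨h1, h2⟩, h3⟩, h4⟩, -⟩ := hs
    have e := hP s h3
    rw [← Finset.mul_prod_erase _ _ (Finset.mem_univ i)] at e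
    rw [hfe₂ s h2, hfe₁ s h1, hPt _ h4] at e
    apply mul_right_cancel₀ hL
    linear_combination -e
end

section
/- Let p and q be distinct prime numbers, let ε and ζ be roots of unity in ℂ, and let s ∈ ℂ. If p^s = ε and q^s = ζ, then s = 0. Equivalently, the functions s ↦ 1 − ε p^{−s} and s ↦ 1 − ζ q^{−s}, for distinct primes p ≠ q and roots of unity ε, ζ, have no common zero other than possibly s = 0. -/
/-!
Raising `p^s` and `q^s` to exponents `N`, `M` that kill the roots of unity gives
`N s log p = 2πi m` and `M s log q = 2πi n` with integers `m`, `n`. Eliminating `2πi`, and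
cancelling `s` if it is nonzero, yields the integer relation `(n N) log p = (m M) log q`.
By unique factorization `log p` and `log q` are linearly independent over `ℤ`
(`coeff_eq_zero_of_mul_log_eq`), so `n = 0`, and then `M s log q = 0` forces `s = 0`.
-/

/-- Taking absolute values turns the relation into `p ^ |a| = q ^ |b|` with natural exponents,
so `a ≠ 0` would make `p` divide `q`. -/
lemma coeff_eq_zero_of_mul_log_eq {p q : ℕ} (hp : p.Prime) (hq : q.Prime) (hpq : p ≠ q)
    {a b : ℤ} (h : (a : ℝ) * Real.log p = b * Real.log q) : a = 0 := by
  have hp0 : (0 : ℝ) < p := by exact_mod_cast hp.pos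
  have hq0 : (0 : ℝ) < q := by exact_mod_cast hq.pos
  have habs : (a.natAbs : ℝ) * Real.log p = b.natAbs * Real.log q := by
    have h' := congrArg abs h
    rw [abs_mul, abs_mul, abs_of_nonneg (Real.log_natCast_nonneg p),
      abs_of_nonneg (Real.log_natCast_nonneg q)] at h'
    simpa [Nat.cast_natAbs] using h'
  rw [← Real.log_pow, ← Real.log_pow] at habs
  have hpow : p ^ a.natAbs = q ^ b.natAbs := by
    exact_mod_cast Real.log_injOn_pos (Set.mem_Ioi.2 (pow_pos hp0 _))
      (Set.mem_Ioi.2 (pow_pos hq0 _)) habs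
  by_contra ha
  have hdvd : p ∣ q ^ b.natAbs := hpow ▸ dvd_pow_self p (Int.natAbs_ne_zero.2 ha)
  exact hpq ((Nat.prime_dvd_prime_iff_eq hp hq).1 (hp.dvd_of_dvd_pow hdvd))


/-- **Two distinct primes cannot simultaneously hit roots of unity.** If `p ≠ q` are primes,
`ε, ζ` are roots of unity, and `p^s = ε` and `q^s = ζ` (with `p^s = exp(s log p)`), then
`s = 0`; equivalently, `1 - ε p^{-s}` and `1 - ζ q^{-s}` have no common zero besides
possibly `s = 0`. -/
theorem stmt_15 (p q : ℕ) (hp : Nat.Prime p) (hq : Nat.Prime q) (hpq : p ≠ q)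
    (ε ζ : ℂ) (hε : ∃ N : ℕ, 0 < N ∧ ε ^ N = 1) (hζ : ∃ N : ℕ, 0 < N ∧ ζ ^ N = 1)
    (s : ℂ) (hps : Complex.exp (s * Real.log p) = ε)
    (hqs : Complex.exp (s * Real.log q) = ζ) :
    s = 0 := by
  obtain ⟨N, hN, hεN⟩ := hε
  obtain ⟨M, hM, hζM⟩ := hζ
  rw [← hps, ← Complex.exp_nat_mul, Complex.exp_eq_one_iff] at hεN
  rw [← hqs, ← Complex.exp_nat_mul, Complex.exp_eq_one_iff] at hζM
  obtain ⟨m, hm⟩ := hεN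
  obtain ⟨n, hn⟩ := hζM
  by_contra hs
  have hrel : ((n * N : ℤ) : ℝ) * Real.log p = ((m * M : ℤ) : ℝ) * Real.log q := by
    have hC : (n : ℂ) * N * (Real.log p : ℂ) = m * M * (Real.log q : ℂ) := by
      apply mul_left_cancel₀ hs
      linear_combination (n : ℂ) * hm - (m : ℂ) * hn
    exact_mod_cast hC
  have hnN := coeff_eq_zero_of_mul_log_eq hp hq hpq hrel
  have hn0 : n = 0 := (mul_eq_zero.1 hnN).resolve_right (by exact_mod_cast hN.ne')
  have hlog : (Real.log q : ℂ) ≠ 0 := by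
    exact_mod_cast (Real.log_pos (by exact_mod_cast hq.one_lt)).ne'
  have hM0 : (M : ℂ) ≠ 0 := by exact_mod_cast hM.ne'
  rw [hn0, Int.cast_zero, zero_mul] at hn
  exact mul_ne_zero hM0 (mul_ne_zero hs hlog) hn
end

section
/- Let K/k be a Galois extension of number fields whose Galois group G is isomorphic to the alternating group A₅ (the icosahedral group of order 60). Let Ω₅, Ω₁₂, Ω₂₀ be the fixed fields of subgroups of G of orders 12, 5, and 3 respectively (so [Ω₅ : k] = 5, [Ω₁₂ : k] = 12, [Ω₂₀ : k] = 20). Then, for every s with Re(s) > 1, the Dedekind zeta functions satisfy ζ_{Ω₂₀}(s)·ζ_k(s)² = ζ_{Ω₅}(s)²·ζ_{Ω₁₂}(s). -/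
/-!
For the icosahedral group the permutation characters satisfy
`Ind_{C₃} 1 + 2 · 1 = 2 Ind_{A₄} 1 + Ind_{C₅} 1`, and the zeta function of the fixed field of `H` is
the Artin L-function of `Ind_H 1`. The proof unwinds this into a comparison of Euler factors that
needs no Artin L-functions.

Fix a prime `p` of `k`. For `n > 0` let `c_n(σ)` be the number of primes `P` of `K` above `p` such
that `σ` acts modulo `P` as the `n`-th power of the Frobenius over `p` (`frobCount`). This is a
class function on the Galois group. If `f` is the common residue degree of the primes of `K` above
`p`, double counting shows (`sum_frobCount`) that for every subgroup `H`
`f · ∑_{h ∈ H} c_n(h) = |H| · ∑_{f_q ∣ n} f_q`,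
where `q` runs over the primes of the fixed field of `H` above `p` and `f_q` is the residue degree
of `q`. Ramification causes no trouble, because the inertia groups are counted along.

The character relation, in the form `Icosahedral.sum_classFunction`, therefore yields a linear
relation between the divisor sums `∑_{f_q ∣ n} f_q` for the four fields. Since these sums for all
`n` determine the multiset of the `f_q` (`Multiset.eq_of_divisor_sums`), the residue degrees above
`p` in `Ω₂₀`, `k`, `k` are together the same as those in `Ω₅`, `Ω₅`, `Ω₁₂`
(`residueDegrees_relation`). So the Euler factors at `p` of the two sides agree, and the theorem
follows from the Euler product (`hasProd_dedekindZetaFn`).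
-/

open NumberField

/-- The Dedekind zeta function of a number field `F`, defined for `Re s > 1` by
`ζ_F(s) = ∑_{I ≠ 0} (N I)^{-s}`, the sum running over the nonzero ideals of `𝓞 F`. -/
noncomputable def dedekindZetaFn (F : Type*) [Field F] [NumberField F] (s : ℂ) : ℂ :=
  ∑' I : {I : Ideal (𝓞 F) // I ≠ ⊥}, (Ideal.absNorm I.1 : ℂ) ^ (-s)

/-! ### The Euler product of the Dedekind zeta function -/

section Euler

open IsDedekindDomain Filter Topology

variable (F : Type*) [Field F] [NumberField F]

/-- Absolute convergence of the Dedekind series for `Re s > 1`: the number of ideals of norm at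
most `n` is `O(n)`, so the ideals, grouped by norm, give a summable L-series. The zero ideal
contributes `0 ^ (-s) = 0`. -/
theorem summable_absNorm_cpow {s : ℂ} (hs : 1 < s.re) :
    Summable fun I : Ideal (𝓞 F) ↦ ‖(Ideal.absNorm I : ℂ) ^ (-s)‖ := by
  have hs0 : s ≠ 0 := by rintro rfl; simp at hs; linarith
  have hL : LSeriesSummable
      (fun n ↦ (Nat.card {I : Ideal (𝓞 F) // Ideal.absNorm I = n} : ℂ)) s := by
    have := LSeriesSummable_of_sum_norm_bigO_and_nonneg (r := 1) (s := s)
      (f := fun n ↦ (Nat.card {I : Ideal (𝓞 F) // Ideal.absNorm I = n} : ℝ)) ?_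
      (fun _ ↦ Nat.cast_nonneg _) zero_le_one (by simpa using hs)
    · simpa using this
    · have h1 := (Ideal.tendsto_norm_le_div_atTop₀ F).comp tendsto_natCast_atTop_atTop
      have h2 := h1.isBigO_one ℝ
      have h3 := h2.mul (Asymptotics.isBigO_refl (fun n : ℕ ↦ (n : ℝ)) atTop)
      refine (h3.congr' ?_ ?_)
      · filter_upwards [eventually_ne_atTop 0] with n hn
        have hn' : (n : ℝ) ≠ 0 := by exact_mod_cast hn
        simp only [Function.comp_apply, Nat.cast_le]
        rw [div_mul_cancel₀ _ hn', ← Nat.cast_sum]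
        congr 1
        rw [← add_left_inj 1, ← Ideal.card_norm_le_eq_card_norm_le_add_one,
          show Finset.Icc 1 n = Finset.Ioc 0 n from Finset.Icc_succ_left_eq_Ioc _ _,
          show 1 = Nat.card {I : Ideal (𝓞 F) // Ideal.absNorm I = 0} by
            simp [Ideal.absNorm_eq_zero_iff],
          Finset.sum_Ioc_add_eq_sum_Icc (n.zero_le),
          ← Finset.card_preimage_eq_sum_card_image_eq
            (fun k _ ↦ Ideal.finite_setOfPred_absNorm_eq k)]
        simp [Set.coe_eq_subtype]
      · filter_upwards with n
        simp
  rw [← (Equiv.sigmaFiberEquiv (Ideal.absNorm (S := 𝓞 F))).summable_iff]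
  refine (summable_sigma_of_nonneg fun x ↦ norm_nonneg
      ((Ideal.absNorm (Equiv.sigmaFiberEquiv (Ideal.absNorm (S := 𝓞 F)) x) : ℂ) ^ (-s))).mpr ?_
  have key : ∀ n : ℕ, ∀ I : {I : Ideal (𝓞 F) // Ideal.absNorm I = n},
      ((fun I : Ideal (𝓞 F) ↦ ‖(Ideal.absNorm I : ℂ) ^ (-s)‖) ∘
        Equiv.sigmaFiberEquiv (Ideal.absNorm (S := 𝓞 F))) ⟨n, I⟩ = ‖(n : ℂ) ^ (-s)‖ := by
    rintro n ⟨I, hI⟩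
    simp [Equiv.sigmaFiberEquiv, hI]
  have hfin : ∀ n : ℕ, Finite {I : Ideal (𝓞 F) // Ideal.absNorm I = n} :=
    fun n ↦ Ideal.finite_setOfPred_absNorm_eq n
  refine ⟨fun n ↦ ?_, ?_⟩
  · have := hfin n
    exact Summable.of_finite
  · refine hL.norm.congr fun n ↦ ?_
    refine Eq.trans ?_ (tsum_congr (key n)).symm
    have := hfin n
    rw [tsum_const, LSeries.term_def]
    split_ifs with h
    · subst h
      rw [Nat.cast_zero, Complex.zero_cpow (neg_ne_zero.mpr hs0)]
      simp
    · rw [Complex.cpow_neg, norm_div, norm_inv, nsmul_eq_mul, div_eq_mul_inv]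
      simp

/-- The sum over ideals all of whose prime divisors lie in the finite set `S` is the product over
`S` of the Euler factors. -/
theorem tsum_factored_eq_prod {s : ℂ} (hs : 1 < s.re) (S : Finset (HeightOneSpectrum (𝓞 F))) :
    ∑' I : Ideal (𝓞 F),
      {I : Ideal (𝓞 F) | ∀ q : HeightOneSpectrum (𝓞 F), q.asIdeal ∣ I → q ∈ S}.indicator
        (fun I ↦ (Ideal.absNorm I : ℂ) ^ (-s)) I =
    ∏ q ∈ S, (1 - (Ideal.absNorm q.asIdeal : ℂ) ^ (-s))⁻¹ := by
  classical
  have hs0 : s ≠ 0 := by rintro rfl; simp at hs; linarith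
  have hsum := (summable_absNorm_cpow F hs).of_norm
  set f : Ideal (𝓞 F) → ℂ := fun I ↦ (Ideal.absNorm I : ℂ) ^ (-s) with hf
  have hfmul : ∀ I J, f (I * J) = f I * f J := fun I J ↦ by
    simp only [hf, map_mul, Nat.cast_mul]
    exact_mod_cast Complex.natCast_mul_natCast_cpow _ _ _
  have hf0 : f ⊥ = 0 := by
    simp only [hf, Ideal.absNorm_bot, Nat.cast_zero]
    exact Complex.zero_cpow (neg_ne_zero.mpr hs0)
  induction S using Finset.induction with
  | empty =>
    rw [tsum_eq_single ⊤]
    · rw [Set.indicator_of_mem]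
      · simp [hf]
      · intro q hq
        exact absurd (top_le_iff.mp (Ideal.le_of_dvd hq)) q.isPrime.ne_top
    · intro I hI
      by_cases hI0 : I = ⊥
      · subst hI0
        rw [Set.indicator_apply_eq_zero]
        exact fun _ ↦ hf0
      · apply Set.indicator_of_notMem
        intro h
        obtain ⟨M, hM, hIM⟩ := Ideal.exists_le_maximal I hI
        have hMb : M ≠ ⊥ := fun hb ↦ hI0 (le_bot_iff.mp (hb ▸ hIM))
        simpa using h ⟨M, hM.isPrime, hMb⟩ (Ideal.dvd_iff_le.mpr hIM)
  | insert q S hq ih =>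
    rw [Finset.prod_insert hq, ← ih]
    set A := {I : Ideal (𝓞 F) | ∀ q : HeightOneSpectrum (𝓞 F), q.asIdeal ∣ I → q ∈ S}
    set B := {I : Ideal (𝓞 F) | ∀ q' : HeightOneSpectrum (𝓞 F), q'.asIdeal ∣ I → q' ∈ insert q S}
      with hB
    have hinj : Function.Injective (fun J : Ideal (𝓞 F) ↦ q.asIdeal * J) :=
      mul_right_injective₀ q.ne_bot
    have hBq : ∀ J, q.asIdeal * J ∈ B ↔ J ∈ B := by
      intro J
      simp only [hB, Set.mem_ofPred_eq]
      refine ⟨fun h q' hq' ↦ h q' (hq'.mul_left _), fun h q' hq' ↦ ?_⟩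
      rcases q'.prime.dvd_or_dvd hq' with h1 | h1
      · have : q' = q := by
          ext1
          have h2 := Ideal.le_of_dvd h1
          exact (q.isMaximal.eq_of_le q'.isPrime.ne_top h2).symm
        simp [this]
      · exact h _ h1
    -- an ideal supported on `insert q S` is either supported on `S` or divisible by `q`, and the
    -- multiples of `q` contribute `N(q) ^ (-s)` times the whole sum
    have hsplit : ∀ I, B.indicator f I = A.indicator f I +
        {I | q.asIdeal ∣ I}.indicator (B.indicator f) I := by
      intro I
      by_cases hI0 : I = ⊥
      · subst hI0
        simp [Set.indicator_apply, hf0]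
      by_cases hqI : q.asIdeal ∣ I
      · have : I ∉ A := fun h ↦ hq (h q hqI)
        simp [Set.indicator_apply, hqI, this]
      · have : I ∈ B ↔ I ∈ A := by
          refine ⟨fun h q' hq' ↦ ?_, fun h q' hq' ↦ Finset.mem_insert_of_mem (h q' hq')⟩
          rcases Finset.mem_insert.mp (h q' hq') with h1 | h1
          · exact absurd (h1 ▸ hq') hqI
          · exact h1
        simp [Set.indicator_apply, hqI, this]
    have h1 : ∑' I, {I | q.asIdeal ∣ I}.indicator (B.indicator f) I =
        f q.asIdeal * ∑' I, B.indicator f I := by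
      rw [← hinj.tsum_eq, ← tsum_mul_left]
      · refine tsum_congr fun J ↦ ?_
        rw [Set.indicator_of_mem (by simp)]
        by_cases hJ : J ∈ B
        · rw [Set.indicator_of_mem ((hBq J).mpr hJ), Set.indicator_of_mem hJ, hfmul]
        · rw [Set.indicator_of_notMem (mt (hBq J).mp hJ), Set.indicator_of_notMem hJ, mul_zero]
      · intro I hI
        have : q.asIdeal ∣ I := by
          by_contra h
          exact hI (Set.indicator_of_notMem (s := {I | q.asIdeal ∣ I}) h _)
        obtain ⟨J, rfl⟩ := this
        exact ⟨J, rfl⟩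
    have h2 : ∑' I, B.indicator f I = ∑' I, A.indicator f I +
        f q.asIdeal * ∑' I, B.indicator f I := by
      rw [← h1, ← (hsum.indicator A).tsum_add ((hsum.indicator B).indicator _)]
      exact tsum_congr hsplit
    have hne : 1 - f q.asIdeal ≠ 0 := by
      intro h
      have hN : 1 < Ideal.absNorm q.asIdeal := by
        have h0 : Ideal.absNorm q.asIdeal ≠ 0 := by
          simpa [Ideal.absNorm_eq_zero_iff] using q.ne_bot
        have h1 : Ideal.absNorm q.asIdeal ≠ 1 := by
          simpa [Ideal.absNorm_eq_one_iff] using q.isPrime.ne_top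
        omega
      have := congrArg norm (sub_eq_zero.mp h).symm
      simp only [hf] at this
      rw [Complex.norm_natCast_cpow_of_pos (by omega), norm_one] at this
      have h3 := Real.rpow_lt_one_of_one_lt_of_neg (x := (Ideal.absNorm q.asIdeal : ℝ))
        (z := (-s).re) (by exact_mod_cast hN) (by simp; linarith)
      linarith
    rw [← mul_right_inj' hne, mul_inv_cancel_left₀ hne]
    linear_combination h2

/-- The Euler product: the finite partial products are sums over the ideals supported on a finite
set of primes, which converge to the full sum by dominated convergence. -/
theorem hasProd_dedekindZetaFn {s : ℂ} (hs : 1 < s.re) :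
    HasProd (fun q : HeightOneSpectrum (𝓞 F) ↦ (1 - (Ideal.absNorm q.asIdeal : ℂ) ^ (-s))⁻¹)
      (dedekindZetaFn F s) := by
  have hs0 : s ≠ 0 := by rintro rfl; simp at hs; linarith
  have hz : dedekindZetaFn F s = ∑' I : Ideal (𝓞 F), (Ideal.absNorm I : ℂ) ^ (-s) := by
    unfold dedekindZetaFn
    refine Function.Injective.tsum_eq Subtype.val_injective
      (f := fun I : Ideal (𝓞 F) ↦ (Ideal.absNorm I : ℂ) ^ (-s)) fun I hI ↦ ?_
    refine ⟨⟨I, fun h ↦ hI ?_⟩, rfl⟩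
    simp only [h, Ideal.absNorm_bot, Nat.cast_zero]
    exact Complex.zero_cpow (neg_ne_zero.mpr hs0)
  unfold HasProd
  simp_rw [SummationFilter.unconditional_filter, ← tsum_factored_eq_prod F hs, hz]
  refine tendsto_tsum_of_dominated_convergence (summable_absNorm_cpow F hs) (fun I ↦ ?_)
    (Eventually.of_forall fun S I ↦ norm_indicator_le_norm_self _ _)
  by_cases hI0 : I = ⊥
  · have : (fun I : Ideal (𝓞 F) ↦ (Ideal.absNorm I : ℂ) ^ (-s)) I = 0 := by
      simp only [hI0, Ideal.absNorm_bot, Nat.cast_zero]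
      exact Complex.zero_cpow (neg_ne_zero.mpr hs0)
    refine tendsto_const_nhds.congr fun S ↦ ?_
    by_cases h : I ∈ {I : Ideal (𝓞 F) | ∀ q : HeightOneSpectrum (𝓞 F), q.asIdeal ∣ I → q ∈ S}
    · rw [Set.indicator_of_mem h]
    · rw [Set.indicator_of_notMem h]; exact this
  · refine tendsto_const_nhds.congr' ?_
    filter_upwards [eventually_ge_atTop (Ideal.finite_factors hI0).toFinset] with S hS
    rw [Set.indicator_of_mem]
    intro q hq
    exact hS (by simpa using hq)

end Euler

/-! ### Multisets and divisor sums -/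

/-- A multiset `A` of positive integers is determined by the sums of its elements dividing `n`,
for all `n > 0`: the element `n` contributes `n * A.count n` to the `n`-th sum, and the rest only
involves smaller integers. -/
theorem Multiset.eq_of_divisor_sums {A B : Multiset ℕ} (hA : 0 ∉ A) (hB : 0 ∉ B)
    (h : ∀ n, 0 < n → (A.filter (· ∣ n)).sum = (B.filter (· ∣ n)).sum) : A = B := by
  have key : ∀ (C : Multiset ℕ) (n : ℕ), 0 < n →
      (C.filter (· ∣ n)).sum = n * C.count n + ∑ d ∈ n.properDivisors, d * C.count d := by
    intro C n hn
    rw [Finset.sum_multiset_count_of_subset _ n.divisors]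
    · rw [← Nat.insert_self_properDivisors hn.ne', Finset.sum_insert (by simp)]
      congr 1
      · rw [Multiset.count_filter_of_pos (p := (· ∣ n)) dvd_rfl, smul_eq_mul, mul_comm]
      · refine Finset.sum_congr rfl fun d hd ↦ ?_
        rw [Multiset.count_filter_of_pos (p := (· ∣ n)) (Nat.mem_properDivisors.mp hd).1,
          smul_eq_mul, mul_comm]
    · intro d hd
      simp only [Multiset.mem_toFinset, Multiset.mem_filter] at hd
      simp [hd.2, hn.ne']
  ext n
  induction n using Nat.strong_induction_on with
  | _ n ih =>
    rcases Nat.eq_zero_or_pos n with rfl | hn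
    · rw [Multiset.count_eq_zero_of_notMem hA, Multiset.count_eq_zero_of_notMem hB]
    · have h1 := h n hn
      rw [key A n hn, key B n hn, Finset.sum_congr rfl fun d hd ↦ by
        rw [ih d (Nat.mem_properDivisors.mp hd).2]] at h1
      exact Nat.eq_of_mul_eq_mul_left hn (Nat.add_right_cancel h1)

/-! ### Class functions on the alternating group of degree five -/

namespace Icosahedral

local notation "A₅" => alternatingGroup (Fin 5)

/-- Representatives of the five conjugacy classes of `A₅`: the identity, a double transposition,
a 3-cycle, and the two classes of 5-cycles, which are interchanged by squaring. -/
def rep : Fin 5 → A₅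
  | 0 => 1
  | 1 => ⟨Equiv.swap 0 1 * Equiv.swap 2 3, by rw [Equiv.Perm.mem_alternatingGroup]; decide⟩
  | 2 => ⟨Equiv.swap 0 1 * Equiv.swap 1 2, by rw [Equiv.Perm.mem_alternatingGroup]; decide⟩
  | 3 => ⟨finRotate 5, by rw [Equiv.Perm.mem_alternatingGroup]; decide⟩
  | 4 => ⟨finRotate 5 ^ 2, by rw [Equiv.Perm.mem_alternatingGroup]; decide⟩

/-- The index of the conjugacy class of `g`, in the numbering of `rep`. Only the two classes of
5-cycles need a conjugacy test; the others are recognised by the order of `g`. -/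
def cls (g : A₅) : Fin 5 :=
  if g = 1 then 0 else if g ^ 2 = 1 then 1 else if g ^ 3 = 1 then 2 else
    if ∃ h : A₅, h * rep 3 = g * h then 3 else 4

theorem conj_rep_cls : ∀ g : A₅, ∃ h : A₅, h * rep (cls g) = g * h := by decide +kernel

theorem card_cls : ∀ i : Fin 5, (Finset.univ.filter fun g : A₅ ↦ cls g = i).card =
    (![1, 15, 20, 12, 12] : Fin 5 → ℕ) i := by decide +kernel

theorem cls_conj (g h : A₅) : cls (h * g * h⁻¹) = cls g := by
  have h3 : (∃ k : A₅, k * rep 3 = h * g * h⁻¹ * k) ↔ ∃ k : A₅, k * rep 3 = g * k := by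
    constructor
    · rintro ⟨k, hk⟩
      exact ⟨h⁻¹ * k, by rw [mul_assoc, hk]; group⟩
    · rintro ⟨k, hk⟩
      exact ⟨h * k, by rw [mul_assoc, hk]; group⟩
  simp only [cls, conj_pow, conj_eq_one_iff, h3]

theorem cls_eq_zero_iff (g : A₅) : cls g = 0 ↔ g = 1 := by
  unfold cls; split_ifs <;> simp_all

theorem cls_eq_one_iff (g : A₅) : cls g = 1 ↔ g ≠ 1 ∧ g ^ 2 = 1 := by
  unfold cls; split_ifs <;> simp_all

theorem cls_eq_two_iff (g : A₅) : cls g = 2 ↔ g ≠ 1 ∧ g ^ 3 = 1 := by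
  have h : g ^ 2 = 1 → g ^ 3 = 1 → g = 1 := fun h2 h3 ↦ by simpa using pow_gcd_eq_one.mpr ⟨h2, h3⟩
  unfold cls; split_ifs <;> simp_all

theorem pow_eq_one_cases : ∀ g : A₅, g ^ 2 = 1 ∨ g ^ 3 = 1 ∨ g ^ 5 = 1 := by decide +kernel

theorem cls_of_pow_three (g : A₅) (hg : g ^ 3 = 1) : cls g = 0 ∨ cls g = 2 := by
  rw [cls_eq_zero_iff, cls_eq_two_iff]
  tauto

theorem cls_of_pow_five (g : A₅) (hg : g ^ 5 = 1) : cls g = 0 ∨ cls g = 3 ∨ cls g = 4 := by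
  have h2 : g ^ 2 = 1 → g = 1 := fun h ↦ by
    simpa using pow_gcd_eq_one.mpr ⟨hg, h⟩
  have h3 : g ^ 3 = 1 → g = 1 := fun h ↦ by
    simpa using pow_gcd_eq_one.mpr ⟨hg, h⟩
  unfold cls; split_ifs <;> simp_all

theorem cls_of_pow_twelve (g : A₅) (hg : g ^ 12 = 1) : cls g = 0 ∨ cls g = 1 ∨ cls g = 2 := by
  rw [cls_eq_zero_iff, cls_eq_one_iff, cls_eq_two_iff]
  rcases pow_eq_one_cases g with h | h | h
  · tauto
  · tauto
  · exact Or.inl (by simpa using pow_gcd_eq_one.mpr ⟨hg, h⟩)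

theorem cls_rep_sq : cls (rep 3 ^ 2) = 4 ∧ cls (rep 4 ^ 2) = 3 := by decide +kernel

theorem cls_sq (g : A₅) : (cls g = 3 → cls (g ^ 2) = 4) ∧ (cls g = 4 → cls (g ^ 2) = 3) := by
  obtain ⟨h, hh⟩ := conj_rep_cls g
  have hg : g ^ 2 = h * rep (cls g) ^ 2 * h⁻¹ := by rw [← conj_pow, hh, mul_inv_cancel_right]
  rw [hg, cls_conj]
  exact ⟨fun hc ↦ by rw [hc, cls_rep_sq.1], fun hc ↦ by rw [hc, cls_rep_sq.2]⟩

theorem rep_two_not_commute : ∀ y : A₅, y ≠ 1 → y ^ 2 = 1 → rep 2 * y ≠ y * rep 2 := by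
  decide +kernel

theorem card_rep_two_inverting :
    (Finset.univ.filter fun y : A₅ ↦ y ≠ 1 ∧ y ^ 2 = 1 ∧ (rep 2 * y) ^ 2 = 1).card = 3 := by
  decide +kernel

theorem exists_conj_rep_two {x : A₅} (hx1 : x ≠ 1) (hx3 : x ^ 3 = 1) :
    ∃ h : A₅, rep 2 = h * x * h⁻¹ := by
  obtain ⟨h, hh⟩ := conj_rep_cls x
  rw [(cls_eq_two_iff x).mpr ⟨hx1, hx3⟩] at hh
  exact ⟨h⁻¹, by rw [mul_assoc, inv_inv, ← hh, inv_mul_cancel_left]⟩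

theorem not_commute {x y : A₅} (hx1 : x ≠ 1) (hx3 : x ^ 3 = 1) (hy1 : y ≠ 1) (hy2 : y ^ 2 = 1) :
    x * y ≠ y * x := by
  obtain ⟨h, hh⟩ := exists_conj_rep_two hx1 hx3
  intro hxy
  refine rep_two_not_commute (h * y * h⁻¹) (by simpa using hy1) (by simp [conj_pow, hy2]) ?_
  rw [hh, conj_mul, conj_mul, hxy]

theorem card_inverting_le {x : A₅} (hx1 : x ≠ 1) (hx3 : x ^ 3 = 1) :
    (Finset.univ.filter fun y : A₅ ↦ y ≠ 1 ∧ y ^ 2 = 1 ∧ (x * y) ^ 2 = 1).card ≤ 3 := by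
  obtain ⟨h, hh⟩ := exists_conj_rep_two hx1 hx3
  rw [← card_rep_two_inverting]
  refine Finset.card_le_card_of_injOn (fun y ↦ h * y * h⁻¹) (fun y hy ↦ ?_)
    (MulAut.conj h).injective.injOn
  simp only [Finset.coe_filter, Finset.mem_univ, true_and, Set.mem_ofPred_eq] at hy ⊢
  refine ⟨by simpa using hy.1, by simp [conj_pow, hy.2.1], ?_⟩
  rw [hh, conj_mul, conj_pow, hy.2.2, mul_one, mul_inv_cancel]

open Classical in
/-- The number of elements of the subgroup `H` lying in the `i`-th conjugacy class of `A₅`. -/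
noncomputable def clsCount (H : Subgroup A₅) (i : Fin 5) : ℕ :=
  (Finset.univ.filter fun h : H ↦ cls h = i).card

open Classical in
theorem sum_eq_sum_clsCount (H : Subgroup A₅) (v : Fin 5 → ℕ) :
    ∑ h : H, v (cls h) = ∑ i, clsCount H i * v i := by
  rw [← Finset.sum_fiberwise (s := Finset.univ) (g := fun h : H ↦ cls h)]
  refine Finset.sum_congr rfl fun i _ ↦ ?_
  rw [clsCount, Finset.sum_congr rfl (g := fun _ ↦ v i), Finset.sum_const, smul_eq_mul]
  intro h hh
  rw [(Finset.mem_filter.mp hh).2]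

theorem sum_clsCount (H : Subgroup A₅) : ∑ i, clsCount H i = Nat.card H := by
  classical
  have := sum_eq_sum_clsCount H 1
  simpa [Nat.card_eq_fintype_card] using this.symm

theorem clsCount_zero (H : Subgroup A₅) : clsCount H 0 = 1 := by
  classical
  rw [clsCount, Finset.card_eq_one]
  refine ⟨1, ?_⟩
  ext h
  simp [cls_eq_zero_iff]

theorem clsCount_eq_zero {H : Subgroup A₅} {i : Fin 5} (h : ∀ g ∈ H, cls g ≠ i) :
    clsCount H i = 0 := by
  classical
  rw [clsCount, Finset.card_eq_zero, Finset.filter_eq_empty_iff]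
  exact fun g _ ↦ h g g.2

theorem pow_card_mem {H : Subgroup A₅} {n : ℕ} (hn : Nat.card H = n) {g : A₅} (hg : g ∈ H) :
    g ^ n = 1 := by
  subst hn
  exact congrArg Subtype.val (pow_card_eq_one' (x := (⟨g, hg⟩ : H)))

theorem clsCount_three {H : Subgroup A₅} (h3 : Nat.card H = 3) :
    clsCount H = ![1, 0, 2, 0, 0] := by
  have h (g) (hg : g ∈ H) := cls_of_pow_three g (pow_card_mem h3 hg)
  have e0 := clsCount_zero H
  have e1 : clsCount H 1 = 0 := clsCount_eq_zero fun g hg ↦ by rcases h g hg with h | h <;> simp [h]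
  have e3 : clsCount H 3 = 0 := clsCount_eq_zero fun g hg ↦ by rcases h g hg with h | h <;> simp [h]
  have e4 : clsCount H 4 = 0 := clsCount_eq_zero fun g hg ↦ by rcases h g hg with h | h <;> simp [h]
  have hs := sum_clsCount H
  rw [Fin.sum_univ_five, h3] at hs
  have e2 : clsCount H 2 = 2 := by omega
  funext i
  fin_cases i <;> simp [*]

/-- Squaring is injective on a group of order `5` and interchanges the two classes of 5-cycles, so
these classes contribute equally many of the four nontrivial elements. -/
theorem clsCount_five {H : Subgroup A₅} (h5 : Nat.card H = 5) :
    clsCount H = ![1, 0, 0, 2, 2] := by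
  classical
  have hp (g) (hg : g ∈ H) := pow_card_mem h5 hg
  have h (g) (hg : g ∈ H) := cls_of_pow_five g (hp g hg)
  have e0 := clsCount_zero H
  have e1 : clsCount H 1 = 0 := clsCount_eq_zero fun g hg ↦ by
    rcases h g hg with h | h | h <;> simp [h]
  have e2 : clsCount H 2 = 0 := clsCount_eq_zero fun g hg ↦ by
    rcases h g hg with h | h | h <;> simp [h]
  have hinj : Function.Injective fun g : H ↦ g ^ 2 := by
    intro a b hab
    have ha : a ^ 5 = 1 := Subtype.ext (hp a a.2)
    have hb : b ^ 5 = 1 := Subtype.ext (hp b b.2)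
    have : (a ^ 2) ^ 3 = (b ^ 2) ^ 3 := congrArg (· ^ 3) hab
    calc a = a ^ 5 * a := by rw [ha, one_mul]
      _ = (a ^ 2) ^ 3 := by rw [← pow_succ, ← pow_mul]
      _ = (b ^ 2) ^ 3 := this
      _ = b ^ 5 * b := by rw [← pow_succ, ← pow_mul]
      _ = b := by rw [hb, one_mul]
  have e34 : clsCount H 3 ≤ clsCount H 4 :=
    Finset.card_le_card_of_injOn (fun g : H ↦ g ^ 2)
      (fun g hg ↦ by simpa using (cls_sq g).1 (by simpa using hg)) hinj.injOn
  have e43 : clsCount H 4 ≤ clsCount H 3 :=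
    Finset.card_le_card_of_injOn (fun g : H ↦ g ^ 2)
      (fun g hg ↦ by simpa using (cls_sq g).2 (by simpa using hg)) hinj.injOn
  have hs := sum_clsCount H
  rw [Fin.sum_univ_five, h5] at hs
  have e3 : clsCount H 3 = 2 := by omega
  have e4 : clsCount H 4 = 2 := by omega
  funext i
  fin_cases i <;> simp [*]

/-- A subgroup `H` of order `12` has three involutions and eight elements of order `3`. Let `a` and
`b` be these numbers, so that `a + b = 11`, and let `x ∈ H` have order `3`. No involution of `A₅`
commutes with `x`, so `3 ∣ a`; elements of order `3` come in pairs, so `b` is even; this leaves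
`(a, b) = (3, 8)` or `(9, 2)`. In the second case `x y` is an involution for each of the nine
involutions `y` of `H`, but only three involutions of `A₅` have this property. -/
theorem clsCount_twelve {H : Subgroup A₅} (h12 : Nat.card H = 12) :
    clsCount H = ![1, 3, 8, 0, 0] := by
  classical
  have h (g) (hg : g ∈ H) := cls_of_pow_twelve g (pow_card_mem h12 hg)
  have e0 := clsCount_zero H
  have e3 : clsCount H 3 = 0 := clsCount_eq_zero fun g hg ↦ by
    rcases h g hg with h | h | h <;> simp [h]
  have e4 : clsCount H 4 = 0 := clsCount_eq_zero fun g hg ↦ by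
    rcases h g hg with h | h | h <;> simp [h]
  have hs := sum_clsCount H
  rw [Fin.sum_univ_five, h12] at hs
  obtain ⟨x, hx⟩ := exists_prime_orderOf_dvd_card' (G := H) 3 (by rw [h12]; norm_num)
  have hx3 : (x : A₅) ^ 3 = 1 := by
    rw [← hx]; exact congrArg Subtype.val (pow_orderOf_eq_one x)
  have hx1 : (x : A₅) ≠ 1 := by
    intro hx1
    rw [show x = 1 from Subtype.ext hx1, orderOf_one] at hx
    omega
  -- conjugation by `x` permutes the involutions of `H` without fixed points
  have hconj (y : H) (hy : cls y = 1) : cls (x * y * x⁻¹ : H) = 1 := by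
    rw [cls_eq_one_iff] at hy ⊢
    push_cast
    rw [conj_pow, hy.2]
    simpa using hy.1
  have d1 : 3 ∣ clsCount H 1 := by
    have : Fact (Nat.Prime 3) := ⟨by norm_num⟩
    let f : Function.End {y : H // cls y = 1} := fun y ↦ ⟨x * y * x⁻¹, hconj y y.2⟩
    have hxx : x ^ 3 = 1 := Subtype.ext hx3
    have hf : f ^ 3 ^ 1 = 1 := by
      funext y
      apply Subtype.ext
      change x * (x * (x * y * x⁻¹) * x⁻¹) * x⁻¹ = y
      calc _ = x ^ 3 * y * (x ^ 3)⁻¹ := by simp only [pow_succ, pow_zero]; group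
        _ = _ := by simp [hxx]
    have := Equiv.Perm.card_fixedPoints_modEq hf
    have hE : Fintype.card f.fixedPoints = 0 := by
      rw [Fintype.card_eq_zero_iff]
      refine ⟨fun ⟨y, hy⟩ ↦ ?_⟩
      have hy1 := (cls_eq_one_iff _).mp y.2
      refine not_commute hx1 hx3 hy1.1 hy1.2 ?_
      have : x * y * x⁻¹ = (y : H) := congrArg Subtype.val hy
      exact congrArg Subtype.val (mul_inv_eq_iff_eq_mul.mp this)
    rw [hE, Fintype.card_subtype] at this
    exact (Nat.modEq_zero_iff_dvd).mp this
  -- inversion permutes the elements of order `3` without fixed points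
  have hinv (y : H) (hy : cls y = 2) : cls (y⁻¹ : H) = 2 := by
    rw [cls_eq_two_iff] at hy ⊢
    push_cast
    rw [inv_pow, hy.2]
    simpa using hy.1
  have d2 : 2 ∣ clsCount H 2 := by
    have : Fact (Nat.Prime 2) := ⟨by norm_num⟩
    let f : Function.End {y : H // cls y = 2} := fun y ↦ ⟨(y : H)⁻¹, hinv y y.2⟩
    have hf : f ^ 2 ^ 1 = 1 := by
      funext y
      apply Subtype.ext
      change (y : H)⁻¹⁻¹ = y
      simp
    have := Equiv.Perm.card_fixedPoints_modEq hf
    have hE : Fintype.card f.fixedPoints = 0 := by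
      rw [Fintype.card_eq_zero_iff]
      refine ⟨fun ⟨y, hy⟩ ↦ ?_⟩
      have hy1 := (cls_eq_two_iff _).mp y.2
      have h1 : (y : H)⁻¹ = (y : H) := congrArg Subtype.val hy
      have h2 : ((y : H) : A₅)⁻¹ = y := congrArg Subtype.val h1
      have h3 : ((y : H) : A₅) ^ 2 = 1 := by
        rw [pow_two]; nth_rewrite 1 [← h2]; simp
      have h4 := hy1.2
      rw [pow_succ, h3, one_mul] at h4
      exact hy1.1 h4
    rw [hE, Fintype.card_subtype] at this
    exact (Nat.modEq_zero_iff_dvd).mp this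
  have n2 : clsCount H 2 ≠ 2 := by
    intro hn2
    -- here `x` and `x⁻¹` would be the only elements of order `3`
    have hset : ({x, x⁻¹} : Finset H) = Finset.univ.filter fun h : H ↦ cls h = 2 := by
      apply Finset.eq_of_subset_of_card_le
      · have hx2 : cls x = 2 := (cls_eq_two_iff _).mpr ⟨hx1, hx3⟩
        intro y hy
        rcases Finset.mem_insert.mp hy with rfl | hy
        · simpa using hx2
        · rw [Finset.mem_singleton.mp hy]
          simpa using hinv x hx2
      · change clsCount H 2 ≤ _
        rw [hn2, Finset.card_pair]
        intro hxx
        have h1 : x ^ 2 = 1 := by rw [pow_two]; nth_rewrite 1 [hxx]; simp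
        have := orderOf_dvd_of_pow_eq_one h1
        rw [hx] at this
        omega
    have hle : clsCount H 1 ≤ 3 := by
      refine le_trans ?_ (card_inverting_le hx1 hx3)
      refine Finset.card_le_card_of_injOn Subtype.val (fun y hy ↦ ?_) Subtype.val_injective.injOn
      have hy1 : cls y = 1 := by simpa using hy
      have hy2 := (cls_eq_one_iff _).mp hy1
      simp only [Finset.coe_filter, Finset.mem_univ, true_and]
      refine ⟨hy2.1, hy2.2, ?_⟩
      rcases h (x * y : H) (x * y).2 with h1 | h1 | h1
      · rw [cls_eq_zero_iff] at h1
        push_cast at h1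
        rw [h1, one_pow]
      · exact ((cls_eq_one_iff _).mp h1).2
      · exfalso
        have hm : x * y ∈ ({x, x⁻¹} : Finset H) := by rw [hset]; simpa using h1
        rcases Finset.mem_insert.mp hm with hm | hm
        · exact hy2.1 (congrArg Subtype.val (mul_eq_left.mp hm))
        · have : y = x⁻¹ * x⁻¹ := eq_inv_mul_of_mul_eq (Finset.mem_singleton.mp hm)
          refine not_commute hx1 hx3 hy2.1 hy2.2 ?_
          rw [this]; push_cast; group
    omega
  have e1 : clsCount H 1 = 3 := by omega
  have e2 : clsCount H 2 = 8 := by omega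
  funext i
  fin_cases i <;> simp [*]

/-- For a class function `c` on `A₅`, the averages of `c` over subgroups of orders `3`, `60`, `12`,
`5` satisfy `avg₃ + 2 avg₆₀ = 2 avg₁₂ + avg₅`, an identity written here with denominators
cleared. By Frobenius reciprocity this is the relation
`Ind_{C₃} 1 + 2 · 1 = 2 Ind_{A₄} 1 + Ind_{C₅} 1` between permutation characters. -/
theorem sum_A5 (c : A₅ → ℕ) (hc : ∀ g h, c (h * g * h⁻¹) = c g) (H12 H5 H3 : Subgroup A₅)
    (h12 : Nat.card H12 = 12) (h5 : Nat.card H5 = 5) (h3 : Nat.card H3 = 3)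
    [Fintype H12] [Fintype H5] [Fintype H3] :
    20 * ∑ h : H3, c h + 2 * ∑ g, c g = 10 * ∑ h : H12, c h + 12 * ∑ h : H5, c h := by
  classical
  have hv : ∀ g, c g = (fun i ↦ c (rep i)) (cls g) := by
    intro g
    obtain ⟨h, hh⟩ := conj_rep_cls g
    have := hc (rep (cls g)) h
    rw [hh, mul_inv_cancel_right] at this
    exact this
  generalize (fun i ↦ c (rep i)) = v at hv
  have hG : ∑ g, c g = ∑ i, (![1, 15, 20, 12, 12] : Fin 5 → ℕ) i * v i := by
    rw [← Finset.sum_fiberwise (s := Finset.univ) (g := cls)]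
    refine Finset.sum_congr rfl fun i _ ↦ ?_
    rw [← card_cls, Finset.sum_congr rfl (g := fun _ ↦ v i), Finset.sum_const, smul_eq_mul]
    intro h hh
    rw [hv, (Finset.mem_filter.mp hh).2]
  have hH : ∀ (H : Subgroup A₅) [Fintype H], ∑ h : H, c h = ∑ i, clsCount H i * v i := by
    intro H _
    rw [← sum_eq_sum_clsCount]
    simp_rw [hv]
    congr!
  rw [hG, hH, hH, hH, clsCount_twelve h12, clsCount_five h5, clsCount_three h3]
  simp [Fin.sum_univ_five]
  ring

/-- The identity `sum_A5` for a group isomorphic to `A₅`. -/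
theorem sum_classFunction {G : Type*} [Group G] [Fintype G] (e : G ≃* A₅) (c : G → ℕ)
    (hc : ∀ g h, c (h * g * h⁻¹) = c g) (H12 H5 H3 : Subgroup G)
    (h12 : Nat.card H12 = 12) (h5 : Nat.card H5 = 5) (h3 : Nat.card H3 = 3)
    [Fintype H12] [Fintype H5] [Fintype H3] :
    20 * ∑ h : H3, c h + 2 * ∑ g, c g = 10 * ∑ h : H12, c h + 12 * ∑ h : H5, c h := by
  classical
  have hcard (H : Subgroup G) : Nat.card (H.map e.toMonoidHom) = Nat.card H :=
    (Nat.card_congr (e.subgroupMap H).toEquiv).symm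
  have hsum (H : Subgroup G) [Fintype H] :
      ∑ h : H, c h = ∑ h : H.map e.toMonoidHom, c (e.symm h) :=
    Fintype.sum_equiv (e.subgroupMap H).toEquiv _ _ fun h ↦ by simp
  have := sum_A5 (fun g ↦ c (e.symm g)) (fun g h ↦ by simp [hc]) (H12.map e.toMonoidHom)
    (H5.map e.toMonoidHom) (H3.map e.toMonoidHom) (by rw [hcard, h12]) (by rw [hcard, h5])
    (by rw [hcard, h3])
  rw [← hsum, ← hsum, ← hsum] at this
  rw [← this, Fintype.sum_equiv e.toEquiv c (fun g ↦ c (e.symm g)) (by simp)]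

end Icosahedral

/-! ### Counting Frobenius elements -/

section FixedField

variable {k K : Type*} [Field k] [Field K] [NumberField K]
    [Algebra k K] [IsGalois k K] (H : Subgroup (K ≃ₐ[k] K))
    [NumberField (IntermediateField.fixedField H)]

theorem isGaloisGroup_fixedField :
    IsGaloisGroup H (𝓞 (IntermediateField.fixedField H)) (𝓞 K) := by
  have : IsGaloisGroup H (IntermediateField.fixedField H) K :=
    IsGaloisGroup.of_fixedPoints_eq (K ≃ₐ[k] K) k K H _ rfl
  exact (inferInstance : @IsGaloisGroup H (𝓞 (IntermediateField.fixedField H)) (𝓞 K) _ _ _ _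
    (RingOfIntegers.instMulSemiringAction K))

end FixedField

section Frob

variable {R S G : Type*} [CommRing R] [CommRing S] [Algebra R S] [Group G] [MulSemiringAction G S]

open scoped Pointwise

/-- The elements of `G` acting modulo `Q` as the `j`-th power of the Frobenius over `q` form a
coset of the inertia group of `Q`. -/
lemma card_frob_pow_eq_card_inertia [Finite G] [IsGaloisGroup G R S] (Q : Ideal S) [Q.IsPrime]
    [Finite (S ⧸ Q)] (q : Ideal R) [Q.LiesOver q] (j : ℕ) :
    Nat.card {σ : G // ∀ x : S, σ • x - x ^ Nat.card (R ⧸ q) ^ j ∈ Q} = Nat.card (Q.inertia G) := by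
  obtain ⟨φ, hφ⟩ := IsArithFrobAt.exists_of_isInvariant R G Q
  have hφ' (x : S) : φ • x - x ^ Nat.card (R ⧸ q) ∈ Q := by
    rw [Ideal.over_def Q q]; exact hφ x
  have hpow (j : ℕ) (x : S) : φ ^ j • x - x ^ Nat.card (R ⧸ q) ^ j ∈ Q := by
    induction j generalizing x with
    | zero => simp
    | succ j ih =>
      have h1 := ih (φ • x)
      have h2 : (φ • x) ^ Nat.card (R ⧸ q) ^ j -
          (x ^ Nat.card (R ⧸ q)) ^ Nat.card (R ⧸ q) ^ j ∈ Q :=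
        Q.mem_of_dvd (sub_dvd_pow_sub_pow _ _ _) (hφ' x)
      have := Q.add_mem h1 h2
      rwa [sub_add_sub_cancel, ← pow_mul, ← pow_succ', smul_smul, ← pow_succ] at this
  refine Nat.card_congr ((Equiv.mulRight (φ ^ j)⁻¹).subtypeEquiv fun σ ↦ ?_)
  change _ ↔ ∀ x : S, (σ * (φ ^ j)⁻¹) • x - x ∈ Q
  constructor
  · intro h x
    have := Q.sub_mem (h ((φ ^ j)⁻¹ • x)) (hpow j ((φ ^ j)⁻¹ • x))
    rwa [sub_sub_sub_cancel_right, smul_inv_smul, smul_smul] at this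
  · intro h x
    have := Q.add_mem (h (φ ^ j • x)) (hpow j x)
    rwa [sub_add_sub_cancel, smul_smul, inv_mul_cancel_right] at this

/-- The number of primes `P` of `S` above `p` such that `σ` acts modulo `P` as `x ↦ x ^ (N p) ^ n`,
the `n`-th power of the Frobenius over `p`. -/
noncomputable def frobCount (G S : Type*) [CommRing S] [Algebra R S] [Group G]
    [MulSemiringAction G S] (p : Ideal R) (n : ℕ) (σ : G) : ℕ :=
  Nat.card {P : p.primesOver S // ∀ x : S, σ • x - x ^ Nat.card (R ⧸ p) ^ n ∈ P.1}

/-- `frobCount` is a class function, since `τ` permutes the primes above `p`. -/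
lemma frobCount_conj [SMulCommClass G R S] (p : Ideal R) (n : ℕ) (σ τ : G) :
    frobCount G S p n (τ * σ * τ⁻¹) = frobCount G S p n σ := by
  refine (Nat.card_congr ((MulAction.toPerm τ).subtypeEquiv fun P ↦ ?_)).symm
  simp only [MulAction.toPerm_apply, Ideal.coe_smul_primesOver,
    Ideal.pointwise_smul_eq_comap, Ideal.mem_comap]
  rw [(MulAction.surjective τ⁻¹).forall]
  simp [smul_sub, mul_smul]

end Frob

section Tower

variable {A B C Γ : Type*} [CommRing A] [CommRing B] [CommRing C] [Algebra A B] [Algebra B C]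

/-- In a tower `A → B → C`, a prime of `C` above `p` amounts to a prime `q` of `B` above `p`
together with a prime of `C` above `q`. -/
noncomputable def primesOverSigma [Algebra A C] [IsScalarTower A B C] (p : Ideal A) :
    (Σ q : p.primesOver B, q.1.primesOver C) ≃ p.primesOver C where
  toFun x := ⟨x.2.1, x.2.2.1, by
    have := x.2.2.2; have := x.1.2.2; exact .trans x.2.1 x.1.1 p⟩
  invFun P := ⟨⟨P.1.under B, by have := P.2.1; infer_instance, by
    have := P.2.2; exact Ideal.LiesOver.tower_bot P.1 _ p⟩, ⟨P.1, P.2.1, inferInstance⟩⟩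
  left_inv := by
    rintro ⟨⟨q, hq, hq'⟩, ⟨P, hP, hP'⟩⟩
    obtain rfl : q = P.under B := hP'.over
    rfl
  right_inv P := rfl

lemma card_quot_eq_pow (p : Ideal A) (q : Ideal B) [Module.Finite A B] [p.IsMaximal] [q.IsPrime]
    [q.LiesOver p] :
    Nat.card (B ⧸ q) = Nat.card (A ⧸ p) ^ q.inertiaDeg A := by
  have : q.IsMaximal := Ideal.IsMaximal.of_liesOver_isMaximal q p
  rw [Ideal.inertiaDeg_eq_of_isMaximal p q]
  let := Ideal.Quotient.field p
  exact Module.natCard_eq_pow_finrank (K := A ⧸ p)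

attribute [local instance] Ideal.Quotient.field in
/-- If an automorphism `γ` fixing `B` acts modulo `P` as the `n`-th power of the Frobenius over `p`,
then this power is trivial on the residue field of `q`, so the residue degree of `q` divides `n`. -/
lemma inertiaDeg_dvd (p : Ideal A) (q : Ideal B) (P : Ideal C) [Module.Finite A B] [p.IsMaximal]
    [q.IsPrime] [q.LiesOver p] [P.LiesOver q] [Group Γ] [MulSemiringAction Γ C]
    [SMulCommClass Γ B C] [Finite (A ⧸ p)] [Finite (B ⧸ q)] (n : ℕ)
    (γ : Γ) (h : ∀ x : C, γ • x - x ^ Nat.card (A ⧸ p) ^ n ∈ P) : q.inertiaDeg A ∣ n := by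
  have hq : q.IsMaximal := Ideal.IsMaximal.of_liesOver_isMaximal q p
  rw [Ideal.inertiaDeg_eq_of_isMaximal p q]
  have := Fintype.ofFinite (A ⧸ p)
  rw [← FiniteField.orderOf_frobeniusAlgHom (A ⧸ p) (B ⧸ q)]
  apply orderOf_dvd_of_pow_eq_one
  ext x
  obtain ⟨b, rfl⟩ := Ideal.Quotient.mk_surjective x
  have h1 := h (algebraMap B C b)
  rw [smul_algebraMap, ← map_pow, ← map_sub, ← Ideal.mem_comap, ← Ideal.under,
    ← Ideal.over_def P q, ← Ideal.Quotient.eq] at h1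
  rw [AlgHom.coe_pow, FiniteField.coe_frobeniusAlgHom, pow_iterate, AlgHom.one_apply,
    ← Nat.card_eq_fintype_card]
  rw [map_pow] at h1
  exact h1.symm

/-- Let `Γ` be the Galois group of `C` over `B`, and suppose that all primes of `C` above `p` have
residue degree `f`. Then the sum of `frobCount` over `Γ` determines `∑ f_q`, the sum of the residue
degrees of the primes `q` of `B` above `p` for which `f_q ∣ n`. Indeed, for `P` above `q` no element
of `Γ` acts modulo `P` as the `n`-th power of the Frobenius over `p` unless `f_q ∣ n`, and then the
number of such elements is the order `e(P|q)` of the inertia group, where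
`|Γ| = #{P above q} · e(P|q) · f(P|q)` and `f = f_q · f(P|q)`. -/
theorem sum_frobCount [Algebra A C] [IsScalarTower A B C] [IsDomain A] [IsDomain B] [IsDomain C]
    [Module.Finite A B] [Module.Finite B C] [Module.Finite A C]
    [Group Γ] [Fintype Γ] [MulSemiringAction Γ C] [IsGaloisGroup Γ B C] [FaithfulSMul B C]
    (p : Ideal A) [p.IsMaximal] [Finite (A ⧸ p)] [Fintype (p.primesOver B)]
    (f : ℕ) (hf : ∀ P : p.primesOver C, P.1.inertiaDeg A = f) (n : ℕ) :
    f * ∑ γ : Γ, frobCount Γ C p n γ =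
      Fintype.card Γ *
        ∑ q : p.primesOver B, if q.1.inertiaDeg A ∣ n then q.1.inertiaDeg A else 0 := by
  classical
  have hfinC : Finite (p.primesOver C) := Algebra.QuasiFinite.finite_primesOver p
  have := Fintype.ofFinite (p.primesOver C)
  have hfinBC (q : p.primesOver B) : Finite (q.1.primesOver C) :=
    Algebra.QuasiFinite.finite_primesOver q.1
  have (q : p.primesOver B) := Fintype.ofFinite (q.1.primesOver C)
  -- double counting of the pairs `(γ, P)`
  have h1 : ∑ γ : Γ, frobCount Γ C p n γ =
      ∑ P : p.primesOver C,
        Nat.card {γ : Γ // ∀ x : C, γ • x - x ^ Nat.card (A ⧸ p) ^ n ∈ P.1} := by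
    simp only [frobCount, Nat.card_eq_fintype_card, Fintype.card_subtype, Finset.card_filter]
    exact Finset.sum_comm
  rw [h1, ← (primesOverSigma (B := B) p).sum_comp, Fintype.sum_sigma, Finset.mul_sum,
    Finset.mul_sum]
  refine Finset.sum_congr rfl fun q _ ↦ ?_
  have hq := q.2.1
  have hqp := q.2.2
  have hqm : q.1.IsMaximal := Ideal.IsMaximal.of_liesOver_isMaximal q.1 p
  have hcard := card_quot_eq_pow p q.1
  have hBq : Finite (B ⧸ q.1) := Nat.finite_of_card_ne_zero
    (by rw [hcard]; exact pow_ne_zero _ Nat.card_pos.ne')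
  change f * ∑ P : q.1.primesOver C,
    Nat.card {γ : Γ // ∀ x : C, γ • x - x ^ Nat.card (A ⧸ p) ^ n ∈ P.1} = _
  split_ifs with hdvd
  · obtain ⟨j, rfl⟩ := hdvd
    rw [Finset.mul_sum]
    have hne : Nonempty (q.1.primesOver C) := inferInstance
    have key (P : q.1.primesOver C) : (q.1.primesOver C).ncard *
        (f * Nat.card {γ : Γ // ∀ x : C,
          γ • x - x ^ Nat.card (A ⧸ p) ^ (q.1.inertiaDeg A * j) ∈ P.1}) =
        Fintype.card Γ * q.1.inertiaDeg A := by
      obtain ⟨P, hP, hPq⟩ := P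
      have hPp : P.LiesOver p := .trans P q.1 p
      have hPm : P.IsMaximal := Ideal.IsMaximal.of_liesOver_isMaximal P q.1
      have : Finite (C ⧸ P) := Nat.finite_of_card_ne_zero
        (by rw [card_quot_eq_pow q.1 P]; exact pow_ne_zero _ Nat.card_pos.ne')
      dsimp only
      rw [pow_mul, ← hcard, card_frob_pow_eq_card_inertia P q.1, ← hf ⟨P, hP, hPp⟩,
        Ideal.inertiaDeg_tower q.1 P, ← Nat.card_eq_fintype_card,
        ← Ideal.ncard_primesOver_mul_card_inertia_mul_finrank (G := Γ) q.1 P]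
      ring
    have hpos : 0 < (q.1.primesOver C).ncard := by
      rw [← Nat.card_coe_set_eq]; exact Nat.card_pos
    refine Nat.eq_of_mul_eq_mul_left hpos ?_
    rw [Finset.mul_sum, Finset.sum_congr rfl fun P _ ↦ key P]
    simp [← Nat.card_eq_fintype_card]
  · have (P : q.1.primesOver C) :
        IsEmpty {γ : Γ // ∀ x : C, γ • x - x ^ Nat.card (A ⧸ p) ^ n ∈ P.1} :=
      ⟨fun γ ↦ hdvd (by have := P.2.2; exact inertiaDeg_dvd p q.1 P.1 n γ.1 γ.2)⟩
    simp

/-! ### Residue degrees and Euler factors -/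

/-- The multiset of residue degrees over `A` of the primes of `B` above `p`. -/
noncomputable def residueDegrees (p : Ideal A) (B : Type*) [CommRing B] [Algebra A B]
    [Module.Finite A B] : Multiset ℕ :=
  (Algebra.QuasiFinite.finite_primesOver (S := B) p).toFinset.val.map fun q ↦ q.inertiaDeg A

lemma zero_notMem_residueDegrees (p : Ideal A) [Module.Finite A B] : 0 ∉ residueDegrees p B := by
  intro h
  obtain ⟨q, hq, hq0⟩ := Multiset.mem_map.mp h
  rw [Finset.mem_val, Set.Finite.mem_toFinset] at hq
  have := hq.1
  exact (q.inertiaDeg_pos A).ne' hq0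

lemma sum_filter_residueDegrees (p : Ideal A) [Module.Finite A B] [Fintype (p.primesOver B)]
    (n : ℕ) :
    ((residueDegrees p B).filter (· ∣ n)).sum =
      ∑ q : p.primesOver B, if q.1.inertiaDeg A ∣ n then q.1.inertiaDeg A else 0 := by
  rw [residueDegrees, Multiset.filter_map, ← Finset.filter_val]
  change ∑ q ∈ _, _ = _
  rw [Finset.sum_filter, Finset.sum_subtype (p := (· ∈ p.primesOver B)) _ (by simp)]
  rfl

end Tower

section Main

open IsDedekindDomain

variable {k F : Type*} [Field k] [NumberField k] [Field F] [NumberField F] [Algebra k F]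

/-- A nonzero prime of `𝓞 F` amounts to a nonzero prime of `𝓞 k` together with a prime of `𝓞 F`
above it. -/
noncomputable def heightOneSigma :
    (Σ p : HeightOneSpectrum (𝓞 k), p.asIdeal.primesOver (𝓞 F)) ≃ HeightOneSpectrum (𝓞 F) where
  toFun x := ⟨x.2.1, x.2.2.1, by
    have := x.2.2.2
    exact Ideal.ne_bot_of_liesOver_of_ne_bot x.1.ne_bot x.2.1⟩
  invFun q := ⟨⟨q.asIdeal.under (𝓞 k), inferInstance, Ideal.under_ne_bot _ q.ne_bot⟩,
    ⟨q.asIdeal, q.isPrime, inferInstance⟩⟩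
  left_inv := by
    rintro ⟨⟨p, hp, hp'⟩, ⟨q, hq, hq'⟩⟩
    obtain rfl : p = q.under (𝓞 k) := hq'.over
    rfl
  right_inv q := rfl

/-- An Euler product over the primes of `F`, regrouped over the primes `p` of `k`: the factor at `p`
depends only on the residue degrees of the primes of `F` above `p`. -/
theorem hasProd_eulerFactor {z s : ℂ}
    (h : HasProd
      (fun q : HeightOneSpectrum (𝓞 F) ↦ (1 - (Ideal.absNorm q.asIdeal : ℂ) ^ (-s))⁻¹) z) :
    HasProd (fun p : HeightOneSpectrum (𝓞 k) ↦ ((residueDegrees p.asIdeal (𝓞 F)).map fun d ↦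
      (1 - ((Ideal.absNorm p.asIdeal ^ d : ℕ) : ℂ) ^ (-s))⁻¹).prod) z := by
  rw [← (heightOneSigma (k := k)).hasProd_iff] at h
  refine h.sigma fun p ↦ ?_
  have hfin := (Algebra.QuasiFinite.finite_primesOver (S := 𝓞 F) p.asIdeal)
  have : Fintype (p.asIdeal.primesOver (𝓞 F)) := hfin.fintype
  convert! hasProd_fintype _ using 1
  rw [residueDegrees, Multiset.map_map]
  change ∏ q ∈ hfin.toFinset, _ = _
  rw [Finset.prod_subtype (p := (· ∈ p.asIdeal.primesOver (𝓞 F))) (F := this) _ (by simp)]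
  refine Finset.prod_congr rfl fun q _ ↦ ?_
  have := q.2.1
  have := q.2.2
  have := p.isMaximal
  simp only [Function.comp_apply, Ideal.absNorm_apply, Submodule.cardQuot_apply]
  rw [← card_quot_eq_pow p.asIdeal q.1]
  rfl

/-- The arithmetic form of the character relation in `sum_A5`: above every prime `p` of `k`,
ramified or not, the residue degrees in `Ω₂₀`, `k`, `k` are together those in `Ω₅`, `Ω₅`, `Ω₁₂`. -/
theorem residueDegrees_relation {K : Type*} [Field K] [NumberField K]
    [Algebra k K] [IsGalois k K]
    (e : (K ≃ₐ[k] K) ≃* alternatingGroup (Fin 5))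
    (H12 H5 H3 : Subgroup (K ≃ₐ[k] K))
    (h12 : Nat.card H12 = 12) (h5 : Nat.card H5 = 5) (h3 : Nat.card H3 = 3)
    [NumberField (IntermediateField.fixedField H12)]
    [NumberField (IntermediateField.fixedField H5)]
    [NumberField (IntermediateField.fixedField H3)] (p : HeightOneSpectrum (𝓞 k)) :
    residueDegrees p.asIdeal (𝓞 (IntermediateField.fixedField H3)) +
        2 • residueDegrees p.asIdeal (𝓞 k) =
      2 • residueDegrees p.asIdeal (𝓞 (IntermediateField.fixedField H12)) +
        residueDegrees p.asIdeal (𝓞 (IntermediateField.fixedField H5)) := by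
  classical
  have := Fintype.ofFinite (K ≃ₐ[k] K)
  have := p.isMaximal
  have hp := p.isPrime
  have : Finite (𝓞 k ⧸ p.asIdeal) := Ideal.finiteQuotientOfFreeOfNeBot _ p.ne_bot
  have hG : Fintype.card (K ≃ₐ[k] K) = 60 := by
    rw [Fintype.card_congr e.toEquiv]; decide +kernel
  have i3 := isGaloisGroup_fixedField H3
  have i5 := isGaloisGroup_fixedField H5
  have i12 := isGaloisGroup_fixedField H12
  obtain ⟨⟨P₀, hP₀, hP₀'⟩⟩ : Nonempty (p.asIdeal.primesOver (𝓞 K)) := inferInstance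
  have hf (P : p.asIdeal.primesOver (𝓞 K)) : P.1.inertiaDeg (𝓞 k) = P₀.inertiaDeg (𝓞 k) := by
    have := P.2.1
    have := P.2.2
    exact Ideal.inertiaDeg_eq_of_isGaloisGroup p.asIdeal _ _ (K ≃ₐ[k] K)
  have hf0 : 0 < P₀.inertiaDeg (𝓞 k) := P₀.inertiaDeg_pos (𝓞 k)
  apply Multiset.eq_of_divisor_sums
  · simp [two_nsmul, zero_notMem_residueDegrees]
  · simp [two_nsmul, zero_notMem_residueDegrees]
  intro n _
  have f1 := (Algebra.QuasiFinite.finite_primesOver (S := 𝓞 k) p.asIdeal).fintype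
  have f3 := (Algebra.QuasiFinite.finite_primesOver
    (S := 𝓞 (IntermediateField.fixedField H3)) p.asIdeal).fintype
  have f5 := (Algebra.QuasiFinite.finite_primesOver
    (S := 𝓞 (IntermediateField.fixedField H5)) p.asIdeal).fintype
  have f12 := (Algebra.QuasiFinite.finite_primesOver
    (S := 𝓞 (IntermediateField.fixedField H12)) p.asIdeal).fintype
  have e1 := sum_frobCount (B := 𝓞 k) (Γ := K ≃ₐ[k] K) p.asIdeal _ hf n
  have e3 := sum_frobCount (B := 𝓞 (IntermediateField.fixedField H3)) (Γ := H3) p.asIdeal _ hf n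
  have e5 := sum_frobCount (B := 𝓞 (IntermediateField.fixedField H5)) (Γ := H5) p.asIdeal _ hf n
  have e12 := sum_frobCount (B := 𝓞 (IntermediateField.fixedField H12)) (Γ := H12) p.asIdeal _ hf n
  rw [← sum_filter_residueDegrees] at e1 e3 e5 e12
  rw [← Nat.card_eq_fintype_card, h3] at e3
  rw [← Nat.card_eq_fintype_card, h5] at e5
  rw [← Nat.card_eq_fintype_card, h12] at e12
  rw [hG] at e1
  have key := Icosahedral.sum_classFunction e (frobCount (K ≃ₐ[k] K) (𝓞 K) p.asIdeal n)
    (fun g h ↦ frobCount_conj _ _ _ _) H12 H5 H3 h12 h5 h3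
  have c3 : ∑ γ : H3, frobCount (K ≃ₐ[k] K) (𝓞 K) p.asIdeal n γ =
      ∑ γ : H3, frobCount H3 (𝓞 K) p.asIdeal n γ := rfl
  have c5 : ∑ γ : H5, frobCount (K ≃ₐ[k] K) (𝓞 K) p.asIdeal n γ =
      ∑ γ : H5, frobCount H5 (𝓞 K) p.asIdeal n γ := rfl
  have c12 : ∑ γ : H12, frobCount (K ≃ₐ[k] K) (𝓞 K) p.asIdeal n γ =
      ∑ γ : H12, frobCount H12 (𝓞 K) p.asIdeal n γ := rfl
  rw [c3, c5, c12] at key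
  have key' := congrArg (P₀.inertiaDeg (𝓞 k) * ·) key
  simp only [mul_add, mul_left_comm (P₀.inertiaDeg (𝓞 k)), e1, e3, e5, e12] at key'
  simp only [two_nsmul, Multiset.filter_add, Multiset.sum_add]
  omega

end Main

/-- **A relation between zeta functions of icosahedral fields.** If `Gal(K/k) ≅ A₅` and
`Ω₅, Ω₁₂, Ω₂₀` are the fixed fields of subgroups of orders `12`, `5`, `3` respectively, then
for `Re s > 1` we have `ζ_{Ω₂₀}(s) ζ_k(s)² = ζ_{Ω₅}(s)² ζ_{Ω₁₂}(s)`. -/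
theorem stmt_19 {k K : Type*} [Field k] [Field K] [NumberField k] [NumberField K]
    [Algebra k K] [IsGalois k K] [FiniteDimensional k K]
    (e : (K ≃ₐ[k] K) ≃* alternatingGroup (Fin 5))
    (H12 H5 H3 : Subgroup (K ≃ₐ[k] K))
    (h12 : Nat.card H12 = 12) (h5 : Nat.card H5 = 5) (h3 : Nat.card H3 = 3)
    [NumberField (IntermediateField.fixedField H12)]
    [NumberField (IntermediateField.fixedField H5)]
    [NumberField (IntermediateField.fixedField H3)] :
    ∀ s : ℂ, 1 < s.re →
      dedekindZetaFn (IntermediateField.fixedField H3) s * dedekindZetaFn k s ^ 2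
        = dedekindZetaFn (IntermediateField.fixedField H12) s ^ 2 *
          dedekindZetaFn (IntermediateField.fixedField H5) s := by
  intro s hs
  have E1 := hasProd_eulerFactor (k := k) (hasProd_dedekindZetaFn k hs)
  have E3 := hasProd_eulerFactor (k := k)
    (hasProd_dedekindZetaFn (IntermediateField.fixedField H3) hs)
  have E5 := hasProd_eulerFactor (k := k)
    (hasProd_dedekindZetaFn (IntermediateField.fixedField H5) hs)
  have E12 := hasProd_eulerFactor (k := k)
    (hasProd_dedekindZetaFn (IntermediateField.fixedField H12) hs)
  simp only [pow_two]
  refine (E3.mul (E1.mul E1)).unique ?_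
  convert! (E12.mul E12).mul E5 using 2 with p
  have hrel := residueDegrees_relation e H12 H5 H3 h12 h5 h3 p
  rw [two_nsmul, two_nsmul] at hrel
  simp only [← Multiset.prod_add, ← Multiset.map_add]
  exact congrArg (fun M ↦ (Multiset.map
    (fun d ↦ (1 - ((Ideal.absNorm p.asIdeal ^ d : ℕ) : ℂ) ^ (-s))⁻¹) M).prod) hrel
end
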